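/- arXiv:1307.6440 — 4 statements merged into one kernel-verified Lean document; each statement's English description precedes it below -/
import Mathlib

section
/- The number of perfect matchings of 2m labeled points on a circle having exactly one pair of crossing chords equals binom(2m, m-2). -/
/-- Two chords `(p.1, p.2)` and `(q.1, q.2)` of a circle with vertices labeled
`0, 1, …, n-1` in circular order interleave, i.e. cross, when
`p.1 < q.1 < p.2 < q.2`. -/
def Interleaves {n : ℕ} (p q : Fin n × Fin n) : Prop :=
  p.1 < q.1 ∧ q.1 < p.2 ∧ p.2 < q.2

instance {n : ℕ} (p q : Fin n × Fin n) : Decidable (Interleaves p q) :=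
  inferInstanceAs (Decidable (_ ∧ _ ∧ _))

/-- The number of crossings of a set of chords (each chord recorded with its
endpoints in increasing order): the number of unordered pairs of chords whose
endpoints interleave around the circle. -/
def crossNum {n : ℕ} (D : Finset (Fin n × Fin n)) : ℕ :=
  ((D ×ˢ D).filter fun pq => Interleaves pq.1 pq.2).card

/-- A perfect matching of the `n` points `0, …, n-1` on a circle: a set of
chords, each recorded with increasing endpoints, such that every vertex
belongs to exactly one chord. -/
structure CircMatching (n : ℕ) where
  chords : Finset (Fin n × Fin n)
  lt : ∀ p ∈ chords, p.1 < p.2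
  mem_unique : ∀ v : Fin n, ∃! p, p ∈ chords ∧ (p.1 = v ∨ p.2 = v)

namespace CircMatching

variable {n : ℕ}

/-- `D` is a perfect matching of the points of `V`, each chord recorded with increasing
endpoints. -/
structure IsMatchingOn (V : Finset (Fin n)) (D : Finset (Fin n × Fin n)) : Prop where
  lt : ∀ p ∈ D, p.1 < p.2
  fst_mem : ∀ p ∈ D, p.1 ∈ V
  snd_mem : ∀ p ∈ D, p.2 ∈ V
  cover : ∀ v ∈ V, ∃ p ∈ D, p.1 = v ∨ p.2 = v
  disj : ∀ p ∈ D, ∀ q ∈ D, p ≠ q → p.1 ≠ q.1 ∧ p.1 ≠ q.2 ∧ p.2 ≠ q.1 ∧ p.2 ≠ q.2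

/-- The endpoint of the chord `p` from which one travels in increasing circular order to the
other endpoint without meeting the point `a`. -/
def opener (a : Fin n) (p : Fin n × Fin n) : Fin n :=
  if p.1 < a ∧ a < p.2 then p.2 else p.1

/-- `D` is a matching of `V` whose only crossing is that of `(a, c)` and `(b, d)`, and `S` is the
set of openers of the remaining chords. -/
structure HasOpeners (V S : Finset (Fin n)) (D : Finset (Fin n × Fin n))
    (a b c d : Fin n) : Prop extends IsMatchingOn V D where
  hab : a < b
  hbc : b < c
  hcd : c < d
  ac_mem : (a, c) ∈ D
  bd_mem : (b, d) ∈ D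
  eq_of_interleaves : ∀ p ∈ D, ∀ q ∈ D, Interleaves p q → p = (a, c) ∧ q = (b, d)
  mem_openers : ∀ x, x ∈ S ↔ ∃ p ∈ D, p ≠ (a, c) ∧ p ≠ (b, d) ∧ opener a p = x

/-- `y` follows `x` immediately in the circular order of the points of `V`. -/
def CircAdj (V : Finset (Fin n)) (x y : Fin n) : Prop :=
  (x < y ∧ ∀ v ∈ V, ¬ (x < v ∧ v < y)) ∨ (y < x ∧ ∀ v ∈ V, y ≤ v ∧ v ≤ x)

/-- The chord joining `x` and `y`. -/
def chord (x y : Fin n) : Fin n × Fin n := (min x y, max x y)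

theorem exists_circAdj {V S : Finset (Fin n)} (hSV : S ⊆ V) (hS : S.Nonempty)
    (hVS : (V \ S).Nonempty) : ∃ x y, x ∈ S ∧ y ∈ V ∧ y ∉ S ∧ CircAdj V x y := by
  obtain ⟨z₀, hz₀⟩ := hVS
  obtain ⟨s₀, hs₀⟩ := hS
  rw [Finset.mem_sdiff] at hz₀
  by_cases hA : ((V \ S).filter fun z => ∃ s ∈ S, s < z).Nonempty
  · obtain ⟨y, hy, hmin⟩ := Finset.exists_min_image _ id hA
    simp only [Finset.mem_filter, Finset.mem_sdiff, id] at hy hmin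
    obtain ⟨⟨hyV, hyS⟩, s, hs, hsy⟩ := hy
    obtain ⟨x, hx, hmax⟩ := Finset.exists_max_image (V.filter fun v => v < y) id
      ⟨s, by simp [hSV hs, hsy]⟩
    simp only [Finset.mem_filter, id] at hx hmax
    refine ⟨x, y, ?_, hyV, hyS, Or.inl ⟨hx.2, fun v hv h => ?_⟩⟩
    · by_contra hxS
      have h1 : s ≤ x := hmax s ⟨hSV hs, hsy⟩
      have h2 : s ≠ x := fun h => hxS (h ▸ hs)
      exact absurd (hmin x ⟨⟨hx.1, hxS⟩, s, hs, lt_of_le_of_ne h1 h2⟩) (not_le.2 hx.2)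
    · exact absurd (hmax v ⟨hv, h.2⟩) (not_le.2 h.1)
  · have hA' : ∀ z ∈ V, z ∉ S → ∀ s ∈ S, z ≤ s := by
      intro z hz hzS s hs
      by_contra h
      exact hA ⟨z, by simpa [hz, hzS] using ⟨s, hs, not_le.1 h⟩⟩
    obtain ⟨x, hx, hmax⟩ := Finset.exists_max_image V id ⟨z₀, hz₀.1⟩
    obtain ⟨y, hy, hmin⟩ := Finset.exists_min_image V id ⟨z₀, hz₀.1⟩
    simp only [id] at hmax hmin
    have hxS : x ∈ S := by
      by_contra h
      have := le_antisymm (hmax _ (hSV hs₀)) (hA' x hx h s₀ hs₀)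
      exact h (this ▸ hs₀)
    have hyS : y ∉ S := by
      intro h
      have := le_antisymm (hmin _ hz₀.1) (hA' z₀ hz₀.1 hz₀.2 y h)
      exact hz₀.2 (this ▸ h)
    exact ⟨x, y, hxS, hy, hyS, Or.inr
      ⟨lt_of_le_of_ne (hmax y hy) (fun h => hyS (h ▸ hxS)), fun v hv => ⟨hmin v hv, hmax v hv⟩⟩⟩

theorem HasOpeners.not_interleaves {V S : Finset (Fin n)} {D : Finset (Fin n × Fin n)}
    {a b c d : Fin n} (h : HasOpeners V S D a b c d) {p q : Fin n × Fin n} (hp : p ∈ D)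
    (hq : q ∈ D) (hne : p ≠ (a, c) ∨ q ≠ (b, d)) :
    ¬ (p.1 < q.1 ∧ q.1 < p.2 ∧ p.2 < q.2) := fun hi => by
  have := h.eq_of_interleaves p hp q hq hi
  tauto

theorem HasOpeners.chord_mem {V S : Finset (Fin n)} {D : Finset (Fin n × Fin n)}
    {a b c d x y : Fin n} (h : HasOpeners V S D a b c d) (hx : x ∈ S) (hyV : y ∈ V) (hy : y ∉ S)
    (hadj : CircAdj V x y) :
    chord x y ∈ D ∧ chord x y ≠ (a, c) ∧ chord x y ≠ (b, d) ∧ opener a (chord x y) = x := by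
  obtain ⟨p, hp, hpac, hpbd, hpx⟩ := (h.mem_openers x).1 hx
  suffices hpe : p = chord x y by
    subst hpe
    exact ⟨hp, hpac, hpbd, hpx⟩
  obtain ⟨q, hq, hqy⟩ := h.cover y hyV
  have hab := h.hab
  have hbc := h.hbc
  have hcd := h.hcd
  have hp12 := h.lt p hp
  have hq12 := h.lt q hq
  have hadj' : ∀ v ∈ V, (x < y ∧ ¬ (x < v ∧ v < y)) ∨ (y < x ∧ y ≤ v ∧ v ≤ x) := by
    intro v hv
    rcases hadj with ⟨h1, h2⟩ | ⟨h1, h2⟩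
    · exact Or.inl ⟨h1, h2 v hv⟩
    · exact Or.inr ⟨h1, h2 v hv⟩
  have adjp1 := hadj' _ (h.fst_mem p hp)
  have adjp2 := hadj' _ (h.snd_mem p hp)
  have adjq1 := hadj' _ (h.fst_mem q hq)
  have adjq2 := hadj' _ (h.snd_mem q hq)
  have adja := hadj' _ (h.fst_mem _ h.ac_mem)
  have adjd := hadj' _ (h.snd_mem _ h.bd_mem)
  have hpa := h.disj p hp _ h.ac_mem hpac
  have hpb := h.disj p hp _ h.bd_mem hpbd
  have i1 := h.not_interleaves hp h.ac_mem (Or.inl hpac)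
  have i2 := h.not_interleaves hp h.bd_mem (Or.inl hpac)
  have i3 := h.not_interleaves h.ac_mem hp (Or.inr hpbd)
  have i4 := h.not_interleaves h.bd_mem hp (Or.inr hpbd)
  have i5 := h.not_interleaves hp hq (Or.inl hpac)
  have i6 := h.not_interleaves hq hp (Or.inr hpbd)
  by_cases hpq : p = q
  · subst hpq
    obtain ⟨p1, p2⟩ := p
    simp only [opener, chord, Prod.mk.injEq] at *
    have hxy : x ≠ y := fun e => hy (e ▸ hx)
    have hpx' : p1 = x ∨ p2 = x := by split_ifs at hpx <;> simp [hpx]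
    rw [min_def, max_def]
    split_ifs <;> omega
  exfalso
  have dpq := h.disj p hp q hq hpq
  have hqS : q = (a, c) ∨ q = (b, d) ∨
      ((q.1 < a ∧ a < q.2) ∧ q.1 = y) ∨ (¬ (q.1 < a ∧ a < q.2) ∧ q.2 = y) := by
    by_cases h1 : q = (a, c)
    · exact Or.inl h1
    by_cases h2 : q = (b, d)
    · exact Or.inr (Or.inl h2)
    have : opener a q ≠ y := fun e => hy ((h.mem_openers y).2 ⟨q, hq, h1, h2, e⟩)
    unfold opener at this
    split_ifs at this with h3
    · exact Or.inr (Or.inr (Or.inl ⟨h3, hqy.resolve_right this⟩))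
    · exact Or.inr (Or.inr (Or.inr ⟨h3, hqy.resolve_left this⟩))
  obtain ⟨p1, p2⟩ := p
  obtain ⟨q1, q2⟩ := q
  simp only [opener, Prod.mk.injEq] at *
  have hpx' : ((p1 < a ∧ a < p2) ∧ p2 = x) ∨ (¬ (p1 < a ∧ a < p2) ∧ p1 = x) := by
    split_ifs at hpx with h3
    · exact Or.inl ⟨h3, hpx⟩
    · exact Or.inr ⟨h3, hpx⟩
  clear hpx hadj hadj'
  rcases hpx' with ⟨hc, rfl⟩ | ⟨hc, rfl⟩ <;>
    rcases hqS with ⟨rfl, rfl⟩ | ⟨rfl, rfl⟩ | ⟨hc', rfl⟩ | ⟨hc', rfl⟩ <;> omega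

theorem opener_eq_or (a : Fin n) (p : Fin n × Fin n) : opener a p = p.1 ∨ opener a p = p.2 := by
  unfold opener
  split_ifs <;> simp

theorem IsMatchingOn.opener_injOn {V : Finset (Fin n)} {D : Finset (Fin n × Fin n)}
    (h : IsMatchingOn V D) (a : Fin n) : Set.InjOn (opener a) D := by
  intro p hp q hq e
  by_contra hne
  have := h.disj p hp q hq hne
  rcases opener_eq_or a p with h1 | h1 <;> rcases opener_eq_or a q with h2 | h2 <;>
    rw [h1, h2] at e <;> tauto

theorem chord_cases (x y : Fin n) : chord x y = (x, y) ∨ chord x y = (y, x) := by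
  rcases le_total x y with h | h <;> simp [chord, h]

theorem HasOpeners.erase {V S : Finset (Fin n)} {D : Finset (Fin n × Fin n)}
    {a b c d x y : Fin n} (h : HasOpeners V S D a b c d) (hx : x ∈ S) (hyV : y ∈ V) (hy : y ∉ S)
    (hadj : CircAdj V x y) :
    HasOpeners ((V.erase x).erase y) (S.erase x) (D.erase (chord x y)) a b c d := by
  obtain ⟨he, hac, hbd, hop⟩ := h.chord_mem hx hyV hy hadj
  have key : ∀ p ∈ D, p ≠ chord x y → (p.1 ≠ x ∧ p.1 ≠ y) ∧ p.2 ≠ x ∧ p.2 ≠ y := by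
    intro p hp hne
    have := h.disj p hp _ he hne
    rcases chord_cases x y with e | e <;> rw [e] at this <;> tauto
  refine ⟨⟨?_, ?_, ?_, ?_, ?_⟩, h.hab, h.hbc, h.hcd, ?_, ?_, ?_, ?_⟩
  · exact fun p hp => h.lt p (Finset.mem_of_mem_erase hp)
  · intro p hp
    rw [Finset.mem_erase] at hp
    have := key p hp.2 hp.1
    simp [h.fst_mem p hp.2, this]
  · intro p hp
    rw [Finset.mem_erase] at hp
    have := key p hp.2 hp.1
    simp [h.snd_mem p hp.2, this]
  · intro v hv
    simp only [Finset.mem_erase] at hv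
    obtain ⟨p, hp, hpv⟩ := h.cover v hv.2.2
    refine ⟨p, Finset.mem_erase.2 ⟨?_, hp⟩, hpv⟩
    rintro rfl
    rcases chord_cases x y with e | e <;> rw [e] at hpv <;> grind
  · exact fun p hp q hq => h.disj p (Finset.mem_of_mem_erase hp) q (Finset.mem_of_mem_erase hq)
  · exact Finset.mem_erase.2 ⟨hac.symm, h.ac_mem⟩
  · exact Finset.mem_erase.2 ⟨hbd.symm, h.bd_mem⟩
  · exact fun p hp q hq =>
      h.eq_of_interleaves p (Finset.mem_of_mem_erase hp) q (Finset.mem_of_mem_erase hq)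
  · intro z
    rw [Finset.mem_erase, h.mem_openers z]
    constructor
    · rintro ⟨hz, p, hp, h1, h2, h3⟩
      refine ⟨p, Finset.mem_erase.2 ⟨?_, hp⟩, h1, h2, h3⟩
      rintro rfl
      exact hz (h3.symm.trans hop)
    · rintro ⟨p, hp, h1, h2, h3⟩
      rw [Finset.mem_erase] at hp
      refine ⟨?_, p, hp.2, h1, h2, h3⟩
      rintro rfl
      exact hp.1 (h.opener_injOn a hp.2 he (h3.trans hop.symm))

theorem HasOpeners.insert {V S : Finset (Fin n)} {D : Finset (Fin n × Fin n)}
    {a b c d x y : Fin n} (hxV : x ∈ V) (hx : x ∈ S) (hyV : y ∈ V)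
    (hadj : CircAdj V x y) (h : HasOpeners ((V.erase x).erase y) (S.erase x) D a b c d) :
    HasOpeners V S (insert (chord x y) D) a b c d := by
  have key : ∀ p ∈ D, (p.1 ∈ V ∧ p.1 ≠ x ∧ p.1 ≠ y) ∧ p.2 ∈ V ∧ p.2 ≠ x ∧ p.2 ≠ y := by
    intro p hp
    have h1 := h.fst_mem p hp
    have h2 := h.snd_mem p hp
    simp only [Finset.mem_erase] at h1 h2
    tauto
  have hlt : (chord x y).1 < (chord x y).2 := by
    rcases hadj with ⟨h1, -⟩ | ⟨h1, -⟩ <;> simp [chord, h1]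
  have hac := key _ h.ac_mem
  have hbd := key _ h.bd_mem
  have hop : opener a (chord x y) = x := by
    rcases hadj with ⟨h1, h2⟩ | ⟨h1, h2⟩
    · simp [chord, h1.le, opener, h2 a hac.1.1]
    · have := h2 a hac.1.1
      simp [chord, h1.le, opener, lt_of_le_of_ne this.1 hac.1.2.2.symm,
        lt_of_le_of_ne this.2 hac.1.2.1]
  have hi : ∀ p ∈ D, ¬ Interleaves p (chord x y) ∧ ¬ Interleaves (chord x y) p := by
    intro p hp
    have hk := key p hp
    unfold Interleaves
    rcases hadj with ⟨h1, h2⟩ | ⟨h1, h2⟩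
    · have e1 := h2 _ hk.1.1
      have e2 := h2 _ hk.2.1
      simp only [chord, min_eq_left h1.le, max_eq_right h1.le]
      omega
    · have e1 := h2 _ hk.1.1
      have e2 := h2 _ hk.2.1
      simp only [chord, min_eq_right h1.le, max_eq_left h1.le]
      omega
  have hself : ¬ Interleaves (chord x y) (chord x y) := fun h => lt_irrefl _ h.1
  have hdisj : ∀ p ∈ D, p.1 ≠ (chord x y).1 ∧ p.1 ≠ (chord x y).2 ∧ p.2 ≠ (chord x y).1 ∧
      p.2 ≠ (chord x y).2 := by
    intro p hp
    have hk := key p hp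
    rcases chord_cases x y with e | e <;> rw [e] <;> tauto
  refine ⟨⟨?_, ?_, ?_, ?_, ?_⟩, h.hab, h.hbc, h.hcd, ?_, ?_, ?_, ?_⟩
  · rw [Finset.forall_mem_insert]
    exact ⟨hlt, h.lt⟩
  · rw [Finset.forall_mem_insert]
    refine ⟨?_, fun p hp => (key p hp).1.1⟩
    rcases chord_cases x y with e | e <;> rw [e] <;> assumption
  · rw [Finset.forall_mem_insert]
    refine ⟨?_, fun p hp => (key p hp).2.1⟩
    rcases chord_cases x y with e | e <;> rw [e] <;> assumption
  · intro v hv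
    by_cases hvxy : v = x ∨ v = y
    · refine ⟨chord x y, Finset.mem_insert_self _ _, ?_⟩
      rcases chord_cases x y with e | e <;> rw [e] <;> grind
    · obtain ⟨p, hp, hpv⟩ := h.cover v (by simp only [Finset.mem_erase]; tauto)
      exact ⟨p, Finset.mem_insert_of_mem hp, hpv⟩
  · intro p hp q hq hne
    rw [Finset.mem_insert] at hp hq
    rcases hp with rfl | hp <;> rcases hq with rfl | hq
    · exact absurd rfl hne
    · have := hdisj q hq
      tauto
    · exact hdisj p hp
    · exact h.disj p hp q hq hne
  · exact Finset.mem_insert_of_mem h.ac_mem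
  · exact Finset.mem_insert_of_mem h.bd_mem
  · intro p hp q hq hpq
    rw [Finset.mem_insert] at hp hq
    rcases hp with rfl | hp <;> rcases hq with rfl | hq
    · exact absurd hpq hself
    · exact absurd hpq (hi q hq).2
    · exact absurd hpq (hi p hp).1
    · exact h.eq_of_interleaves p hp q hq hpq
  · intro z
    by_cases hz : z = x
    · subst hz
      refine iff_of_true hx ⟨_, Finset.mem_insert_self _ _, ?_, ?_, hop⟩
      · intro e
        exact (hdisj _ h.ac_mem).1 (by rw [e])
      · intro e
        exact (hdisj _ h.bd_mem).1 (by rw [e])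
    · have := h.mem_openers z
      simp only [Finset.mem_erase, ne_eq, hz, not_false_eq_true, true_and] at this
      rw [this]
      constructor
      · rintro ⟨p, hp, h1⟩
        exact ⟨p, Finset.mem_insert_of_mem hp, h1⟩
      · rintro ⟨p, hp, h1, h2, h3⟩
        rcases Finset.mem_insert.1 hp with rfl | hp
        · exact absurd (h3.symm.trans hop) hz
        · exact ⟨p, hp, h1, h2, h3⟩

theorem HasOpeners.eq_pair {V : Finset (Fin n)} {D : Finset (Fin n × Fin n)} {a b c d : Fin n}
    (h : HasOpeners V ∅ D a b c d) : D = {(a, c), (b, d)} := by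
  ext p
  simp only [Finset.mem_insert, Finset.mem_singleton]
  constructor
  · intro hp
    by_contra hne
    rw [not_or] at hne
    simpa using (h.mem_openers (opener a p)).2 ⟨p, hp, hne.1, hne.2, rfl⟩
  · rintro (rfl | rfl)
    exacts [h.ac_mem, h.bd_mem]

theorem hasOpeners_pair {a b c d : Fin n} (hab : a < b) (hbc : b < c) (hcd : c < d) :
    HasOpeners {a, b, c, d} ∅ {(a, c), (b, d)} a b c d := by
  refine ⟨⟨?_, ?_, ?_, ?_, ?_⟩, hab, hbc, hcd, ?_, ?_, ?_, ?_⟩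
  · simp [hab.trans hbc, hbc.trans hcd]
  · simp
  · simp
  · simp
  · simp only [Finset.forall_mem_insert, Finset.mem_singleton, forall_eq]
    simp
    omega
  · simp
  · simp
  · simp only [Finset.forall_mem_insert, Finset.mem_singleton, forall_eq, Interleaves]
    simp
    omega
  · intro x
    simp

theorem exists_eq_quadruple {V : Finset (Fin n)} (hV : V.card = 4) :
    ∃ a b c d, a < b ∧ b < c ∧ c < d ∧ V = {a, b, c, d} := by
  let f := V.orderEmbOfFin hV
  refine ⟨f 0, f 1, f 2, f 3, ?_, ?_, ?_, ?_⟩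
  · exact f.strictMono (by decide)
  · exact f.strictMono (by decide)
  · exact f.strictMono (by decide)
  · rw [← Finset.coe_inj, ← Finset.range_orderEmbOfFin V hV]
    ext v
    simp only [Set.mem_range, Fin.exists_fin_succ]
    simp [f, eq_comm]

theorem existsUnique_hasOpeners (k : ℕ) : ∀ V S : Finset (Fin n), S ⊆ V → S.card = k →
    V.card = 2 * k + 4 → ∃! D, ∃ a b c d, HasOpeners V S D a b c d := by
  induction k with
  | zero =>
    intro V S _ hS hV
    rw [Finset.card_eq_zero] at hS
    subst hS
    obtain ⟨a, b, c, d, hab, hbc, hcd, rfl⟩ := exists_eq_quadruple hV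
    refine ⟨_, ⟨a, b, c, d, hasOpeners_pair hab hbc hcd⟩, ?_⟩
    rintro D ⟨a', b', c', d', h⟩
    rw [h.eq_pair]
    have h1 := h.fst_mem _ h.ac_mem
    have h2 := h.snd_mem _ h.ac_mem
    have h3 := h.fst_mem _ h.bd_mem
    have h4 := h.snd_mem _ h.bd_mem
    have hab' := h.hab
    have hbc' := h.hbc
    have hcd' := h.hcd
    simp only [Finset.mem_insert, Finset.mem_singleton] at h1 h2 h3 h4
    obtain rfl : a' = a := by omega
    obtain rfl : d' = d := by omega
    obtain rfl : b' = b := by omega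
    obtain rfl : c' = c := by omega
    rfl
  | succ k ih =>
    intro V S hSV hS hV
    obtain ⟨x, y, hx, hyV, hyS, hadj⟩ := exists_circAdj hSV
      (Finset.card_pos.1 (by omega))
      (Finset.card_pos.1 (by rw [Finset.card_sdiff_of_subset hSV]; omega))
    have hxy : y ≠ x := fun e => hyS (e ▸ hx)
    have hyV' : y ∈ V.erase x := Finset.mem_erase.2 ⟨hxy, hyV⟩
    obtain ⟨D, ⟨a, b, c, d, hD⟩, huniq⟩ := ih ((V.erase x).erase y) (S.erase x)
      (fun z hz => by
        rw [Finset.mem_erase] at hz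
        simp only [Finset.mem_erase]
        exact ⟨fun e => hyS (e ▸ hz.2), hz.1, hSV hz.2⟩)
      (by rw [Finset.card_erase_of_mem hx]; omega)
      (by rw [Finset.card_erase_of_mem hyV', Finset.card_erase_of_mem (hSV hx)]; omega)
    refine ⟨_, ⟨a, b, c, d, hD.insert (hSV hx) hx hyV hadj⟩, ?_⟩
    rintro E ⟨a', b', c', d', hE⟩
    rw [← huniq _ ⟨a', b', c', d', hE.erase hx hyV hyS hadj⟩,
      Finset.insert_erase (hE.chord_mem hx hyV hyS hadj).1]

theorem IsMatchingOn.card_eq {V : Finset (Fin n)} {D : Finset (Fin n × Fin n)}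
    (h : IsMatchingOn V D) : V.card = 2 * D.card := by
  have hV : V = D.biUnion fun p => {p.1, p.2} := by
    ext v
    simp only [Finset.mem_biUnion, Finset.mem_insert, Finset.mem_singleton]
    constructor
    · intro hv
      obtain ⟨p, hp, hpv⟩ := h.cover v hv
      exact ⟨p, hp, by tauto⟩
    · rintro ⟨p, hp, rfl | rfl⟩
      exacts [h.fst_mem p hp, h.snd_mem p hp]
  rw [hV, Finset.card_biUnion, Finset.sum_const_nat (m := 2), mul_comm]
  · exact fun p hp => Finset.card_pair (h.lt p hp).ne
  · intro p hp q hq hne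
    have := h.disj p hp q hq hne
    simp
    tauto

theorem HasOpeners.eq_image {V S : Finset (Fin n)} {D : Finset (Fin n × Fin n)}
    {a b c d : Fin n} (h : HasOpeners V S D a b c d) :
    S = ((D.erase (a, c)).erase (b, d)).image (opener a) := by
  ext x
  rw [h.mem_openers]
  simp only [Finset.mem_image, Finset.mem_erase]
  exact exists_congr fun p => by tauto

theorem HasOpeners.card_eq {V S : Finset (Fin n)} {D : Finset (Fin n × Fin n)}
    {a b c d : Fin n} (h : HasOpeners V S D a b c d) : V.card = 2 * S.card + 4 := by
  have hbd : (b, d) ∈ D.erase (a, c) :=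
    Finset.mem_erase.2 ⟨fun e => h.hab.ne' (congrArg Prod.fst e), h.bd_mem⟩
  have h1 := Finset.card_erase_add_one h.ac_mem
  have h2 := Finset.card_erase_add_one hbd
  rw [h.toIsMatchingOn.card_eq, h.eq_image, Finset.card_image_of_injOn]
  · omega
  · exact (h.opener_injOn a).mono fun p hp =>
      Finset.mem_of_mem_erase (Finset.mem_of_mem_erase hp)

theorem HasOpeners.openers_unique {V S S' : Finset (Fin n)} {D : Finset (Fin n × Fin n)}
    {a b c d a' b' c' d' : Fin n} (h : HasOpeners V S D a b c d)
    (h' : HasOpeners V S' D a' b' c' d') : S = S' := by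
  have := h.eq_of_interleaves _ h'.ac_mem _ h'.bd_mem ⟨h'.hab, h'.hbc, h'.hcd⟩
  simp only [Prod.mk.injEq] at this
  obtain ⟨⟨rfl, rfl⟩, rfl, rfl⟩ := this
  rw [h.eq_image, h'.eq_image]

theorem isMatchingOn_univ (M : CircMatching n) : IsMatchingOn Finset.univ M.chords where
  lt := M.lt
  fst_mem _ _ := Finset.mem_univ _
  snd_mem _ _ := Finset.mem_univ _
  cover v _ := by
    obtain ⟨p, hp, -⟩ := M.mem_unique v
    exact ⟨p, hp⟩
  disj p hp q hq hne := by
    refine ⟨?_, ?_, ?_, ?_⟩ <;> intro e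
    · exact hne ((M.mem_unique p.1).unique ⟨hp, Or.inl rfl⟩ ⟨hq, Or.inl e.symm⟩)
    · exact hne ((M.mem_unique p.1).unique ⟨hp, Or.inl rfl⟩ ⟨hq, Or.inr e.symm⟩)
    · exact hne ((M.mem_unique p.2).unique ⟨hp, Or.inr rfl⟩ ⟨hq, Or.inl e.symm⟩)
    · exact hne ((M.mem_unique p.2).unique ⟨hp, Or.inr rfl⟩ ⟨hq, Or.inr e.symm⟩)

theorem exists_chords_eq {D : Finset (Fin n × Fin n)} (h : IsMatchingOn Finset.univ D) :
    ∃ M : CircMatching n, M.chords = D := by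
  refine ⟨⟨D, h.lt, fun v => ?_⟩, rfl⟩
  obtain ⟨p, hp, hpv⟩ := h.cover v (Finset.mem_univ v)
  refine ⟨p, ⟨hp, hpv⟩, ?_⟩
  rintro q ⟨hq, hqv⟩
  by_contra hne
  have := h.disj q hq p hp hne
  grind

theorem crossNum_eq_one_iff (M : CircMatching n) :
    crossNum M.chords = 1 ↔ ∃ S a b c d, HasOpeners Finset.univ S M.chords a b c d := by
  rw [crossNum, Finset.card_eq_one]
  constructor
  · rintro ⟨⟨⟨a, c⟩, b, d⟩, hpq⟩
    have hmem : ∀ p q, (p ∈ M.chords ∧ q ∈ M.chords) ∧ Interleaves p q ↔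
        p = (a, c) ∧ q = (b, d) := by
      intro p q
      have := Finset.ext_iff.1 hpq (p, q)
      simpa only [Finset.mem_filter, Finset.mem_product, Finset.mem_singleton, Prod.mk.injEq]
        using this
    obtain ⟨⟨hac, hbd⟩, hab, hbc, hcd⟩ := (hmem _ _).2 ⟨rfl, rfl⟩
    refine ⟨((M.chords.erase (a, c)).erase (b, d)).image (opener a), a, b, c, d,
      M.isMatchingOn_univ, hab, hbc, hcd, hac, hbd,
      fun p hp q hq h => (hmem p q).1 ⟨⟨hp, hq⟩, h⟩, fun x => ?_⟩
    simp only [Finset.mem_image, Finset.mem_erase]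
    exact exists_congr fun p => by tauto
  · rintro ⟨S, a, b, c, d, h⟩
    refine ⟨((a, c), (b, d)), ?_⟩
    ext ⟨p, q⟩
    simp only [Finset.mem_filter, Finset.mem_product, Finset.mem_singleton, Prod.mk.injEq]
    constructor
    · rintro ⟨⟨hp, hq⟩, hi⟩
      exact h.eq_of_interleaves p hp q hq hi
    · rintro ⟨rfl, rfl⟩
      exact ⟨⟨h.ac_mem, h.bd_mem⟩, h.hab, h.hbc, h.hcd⟩

theorem chords_injective : Function.Injective (chords : CircMatching n → _) := by
  rintro ⟨D, _, _⟩ ⟨E, _, _⟩ rfl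
  rfl

end CircMatching

open CircMatching in
/-- The number of perfect matchings of `2m` labeled points on a circle having
exactly one pair of crossing chords equals `binom(2m, m-2)`. -/
theorem card_matchings_one_crossing (m : ℕ) (hm : 2 ≤ m) :
    Nat.card {M : CircMatching (2 * m) // crossNum M.chords = 1} =
      Nat.choose (2 * m) (m - 2) := by
  have hex : ∀ M : {M : CircMatching (2 * m) // crossNum M.chords = 1},
      ∃ S : {S : Finset (Fin (2 * m)) // S.card = m - 2},
        ∃ a b c d, HasOpeners Finset.univ S.1 M.1.chords a b c d := by
    intro M
    obtain ⟨S, a, b, c, d, h⟩ := (crossNum_eq_one_iff M.1).1 M.2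
    have := h.card_eq
    rw [Finset.card_univ, Fintype.card_fin] at this
    exact ⟨⟨S, by omega⟩, a, b, c, d, h⟩
  have huniq : ∀ S : {S : Finset (Fin (2 * m)) // S.card = m - 2},
      ∃! D, ∃ a b c d, HasOpeners Finset.univ S.1 D a b c d := fun S =>
    existsUnique_hasOpeners (m - 2) Finset.univ S.1 (Finset.subset_univ _) S.2
      (by rw [Finset.card_univ, Fintype.card_fin]; omega)
  choose f hf using hex
  have hbij : Function.Bijective f := by
    constructor
    · intro M N h
      exact Subtype.ext (chords_injective ((huniq (f M)).unique (hf M) (h ▸ hf N)))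
    · intro S
      obtain ⟨D, ⟨a, b, c, d, hD⟩, -⟩ := huniq S
      obtain ⟨M, rfl⟩ := exists_chords_eq hD.toIsMatchingOn
      refine ⟨⟨M, (crossNum_eq_one_iff M).2 ⟨_, a, b, c, d, hD⟩⟩, Subtype.ext ?_⟩
      obtain ⟨a', b', c', d', h⟩ := hf ⟨M, (crossNum_eq_one_iff M).2 ⟨_, a, b, c, d, hD⟩⟩
      exact h.openers_unique hD
  rw [Nat.card_eq_of_bijective f hbij, Nat.card_eq_fintype_card, Fintype.card_finset_len,
    Fintype.card_fin]
end

section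
/- For any core matching K with k(K) ≥ 1 crossings, the number n_1(K) of regions of K with exactly one boundary arc satisfies n_1(K) ≤ 3·k(K) + 1, with equality only when k(K) = 1. -/
/-- Two chords cross when their endpoints interleave, in either order. -/
def CrossRel {n : ℕ} (p q : Fin n × Fin n) : Prop :=
  Interleaves p q ∨ Interleaves q p

/-- A core matching: a perfect matching in which every chord is involved in at
least one crossing. -/
def IsCoreMatching {n : ℕ} (M : CircMatching n) : Prop :=
  ∀ p ∈ M.chords, ∃ q ∈ M.chords, CrossRel p q

/-- The `n` points on the unit circle, labeled in circular order. -/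
noncomputable def circPt (n : ℕ) (j : Fin n) : ℂ :=
  Complex.exp (2 * (Real.pi : ℂ) * Complex.I * ((j : ℕ) : ℂ) / ((n : ℕ) : ℂ))

/-- The chord of the unit circle joining the points labeled `p.1` and `p.2`,
as a segment in the plane. -/
noncomputable def chordSeg (n : ℕ) (p : Fin n × Fin n) : Set ℂ :=
  segment ℝ (circPt n p.1) (circPt n p.2)

/-- The complement of a set of chords in the closed unit disk. -/
noncomputable def diskComplement {n : ℕ} (D : Finset (Fin n × Fin n)) : Set ℂ :=
  Metric.closedBall (0 : ℂ) 1 \ ⋃ p ∈ D, chordSeg n p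

/-- The regions of a set of chords: the connected components of the complement
of the chords in the closed unit disk. -/
noncomputable def regions {n : ℕ} (D : Finset (Fin n × Fin n)) : Set (Set ℂ) :=
  {C | ∃ x ∈ diskComplement D, C = connectedComponentIn (diskComplement D) x}

/-- The number of boundary arcs of a region: the number of connected components
of its intersection with the unit circle. -/
noncomputable def arcCount (C : Set ℂ) : ℕ :=
  Nat.card (ConnectedComponents ↥(C ∩ Metric.sphere (0 : ℂ) 1))

/-- `nReg D i` is the number `nᵢ` of regions of the chord configuration `D`
having exactly `i` boundary arcs. -/
noncomputable def nReg {n : ℕ} (D : Finset (Fin n × Fin n)) (i : ℕ) : ℕ :=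
  Nat.card {C : Set ℂ // C ∈ regions D ∧ arcCount C = i}

namespace SimpleGraph

/-- A graph has at most as many vertices as it has edges and connected components together. -/
theorem card_vert_le_card_edgeSet_add_card_connectedComponent {V : Type*} [Finite V]
    (G : SimpleGraph V) :
    Nat.card V ≤ Nat.card G.edgeSet + Nat.card G.ConnectedComponent := by
  classical
  let root : V → V := fun v => (G.connectedComponentMk v).out
  have hroot : ∀ v, G.Reachable v (root v) := fun v =>
    (ConnectedComponent.exact (Quot.out_eq (G.connectedComponentMk v))).symm
  have hparent : ∀ v, v ≠ root v →
      ∃ w, G.Adj v w ∧ G.dist w (root v) < G.dist v (root v) := by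
    intro v hv
    have h := hroot v
    generalize root v = r at h hv
    obtain ⟨W, hW⟩ := h.exists_walk_length_eq_dist
    cases W with
    | nil => exact absurd rfl hv
    | cons h t =>
      refine ⟨_, h, ?_⟩
      rw [← hW, Walk.length_cons]
      exact Nat.lt_succ_of_le (dist_le t)
  choose parent hadj hdist using hparent
  let f : V → G.edgeSet ⊕ G.ConnectedComponent := fun v =>
    if h : v = root v then Sum.inr (G.connectedComponentMk v)
    else Sum.inl ⟨s(v, parent v h), hadj v h⟩
  have hf : Function.Injective f := by
    intro v w hvw
    have hroot_eq : G.connectedComponentMk v = G.connectedComponentMk w → root v = root w :=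
      fun h => by simp only [root, h]
    by_cases hv : v = root v <;> by_cases hw : w = root w
    · simp only [f, dif_pos hv, dif_pos hw, Sum.inr.injEq] at hvw
      rw [hv, hw, hroot_eq hvw]
    · simp [f, dif_pos hv, dif_neg hw] at hvw
    · simp [f, dif_neg hv, dif_pos hw] at hvw
    · simp only [f, dif_neg hv, dif_neg hw, Sum.inl.injEq] at hvw
      replace hvw := Sym2.eq_iff.1 (congrArg Subtype.val hvw)
      rcases hvw with h | ⟨h1, h2⟩
      · exact h.1
      · have h3 := hroot_eq (ConnectedComponent.sound (h2 ▸ (hadj v hv).reachable))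
        have h4 := hdist v hv
        have h5 := hdist w hw
        rw [h2, h3] at h4
        rw [← h1, ← h3] at h5
        rw [← h3] at h4
        omega
  rw [← Nat.card_sum]
  exact Nat.card_le_card_of_injective f hf

end SimpleGraph

namespace CircMatching

variable {n : ℕ} (M : CircMatching n)

theorem eq_of_mem_of_mem {p q : Fin n × Fin n} (hp : p ∈ M.chords) (hq : q ∈ M.chords)
    {v : Fin n} (hpv : p.1 = v ∨ p.2 = v) (hqv : q.1 = v ∨ q.2 = v) : p = q :=
  (M.mem_unique v).unique ⟨hp, hpv⟩ ⟨hq, hqv⟩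

/-- The crossing graph of a matching: its vertices are the chords, and two chords are adjacent
when they cross. -/
def crossGraph : SimpleGraph M.chords where
  Adj p q := CrossRel p.1 q.1
  symm := ⟨fun _ _ h => Or.symm h⟩
  loopless := ⟨fun _ h => h.elim (fun h => lt_irrefl _ h.1) (fun h => lt_irrefl _ h.1)⟩

/-- The chord through a vertex. -/
noncomputable def chordAt (v : Fin n) : M.chords :=
  ⟨(M.mem_unique v).choose, (M.mem_unique v).choose_spec.1.1⟩

theorem chordAt_spec (v : Fin n) : (M.chordAt v).1.1 = v ∨ (M.chordAt v).1.2 = v :=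
  (M.mem_unique v).choose_spec.1.2

theorem chordAt_eq {p : M.chords} {v : Fin n} (h : p.1.1 = v ∨ p.1.2 = v) : M.chordAt v = p :=
  Subtype.ext (M.eq_of_mem_of_mem (M.chordAt v).2 p.2 (M.chordAt_spec v) h)

/-- The component of the crossing graph that contains the chord through a vertex. -/
noncomputable def comp (v : Fin n) : M.crossGraph.ConnectedComponent :=
  M.crossGraph.connectedComponentMk (M.chordAt v)

theorem comp_fst (p : M.chords) : M.comp p.1.1 = M.crossGraph.connectedComponentMk p := by
  rw [comp, M.chordAt_eq (Or.inl rfl)]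

theorem comp_snd (p : M.chords) : M.comp p.1.2 = M.crossGraph.connectedComponentMk p := by
  rw [comp, M.chordAt_eq (Or.inr rfl)]

theorem comp_surjective : Function.Surjective M.comp := fun Y =>
  Y.ind fun p => ⟨_, M.comp_fst p⟩

theorem card_le_two_mul_card_chords : n ≤ 2 * M.chords.card := by
  have h : Function.Surjective
      (fun x : M.chords × Bool => if x.2 then x.1.1.1 else x.1.1.2) := fun v => by
    rcases M.chordAt_spec v with h | h
    · exact ⟨(M.chordAt v, true), by simpa using h⟩
    · exact ⟨(M.chordAt v, false), by simpa using h⟩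
  have := Fintype.card_le_of_surjective _ h
  simp at this
  omega

theorem card_edgeSet_crossGraph_le : Nat.card M.crossGraph.edgeSet ≤ crossNum M.chords := by
  classical
  rw [crossNum, ← Nat.card_eq_finsetCard]
  refine Nat.card_le_card_of_surjective (fun x =>
    ⟨s(⟨x.1.1, ?_⟩, ⟨x.1.2, ?_⟩), ?_⟩) ?_
  · exact (Finset.mem_product.1 (Finset.mem_filter.1 x.2).1).1
  · exact (Finset.mem_product.1 (Finset.mem_filter.1 x.2).1).2
  · exact Or.inl (Finset.mem_filter.1 x.2).2
  · rintro ⟨e, he⟩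
    induction e with
    | _ p q =>
      rcases he with h | h
      · exact ⟨⟨(p.1, q.1), by simpa using h⟩, rfl⟩
      · exact ⟨⟨(q.1, p.1), by simpa using h⟩, Subtype.ext Sym2.eq_swap⟩

theorem card_connectedComponent_le_card_edgeSet (hcore : IsCoreMatching M) :
    Nat.card M.crossGraph.ConnectedComponent ≤ Nat.card M.crossGraph.edgeSet := by
  have h : ∀ Y : M.crossGraph.ConnectedComponent, ∃ e : M.crossGraph.edgeSet,
      ∀ p ∈ e.1, M.crossGraph.connectedComponentMk p = Y := by
    refine fun Y => Y.ind fun p => ?_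
    obtain ⟨q, hq, hpq⟩ := hcore p.1 p.2
    have hadj : M.crossGraph.Adj p ⟨q, hq⟩ := hpq
    refine ⟨⟨s(p, ⟨q, hq⟩), hadj⟩, fun r hr => ?_⟩
    rcases Sym2.mem_iff.1 hr with rfl | rfl
    · rfl
    · exact SimpleGraph.ConnectedComponent.sound hadj.reachable.symm
  choose f hf using h
  refine Nat.card_le_card_of_injective f fun Y Z hYZ => ?_
  have h1 := hf Y (f Y).1.out.1 (Sym2.out_fst_mem _)
  rw [← h1]
  exact hf Z _ (hYZ ▸ Sym2.out_fst_mem _)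

/-- The arcs following the vertices `i` and `j` lie on the same side of every chord. -/
def Unseparated (i j : Fin n) : Prop :=
  ∀ p ∈ M.chords, (p.1 ≤ i ∧ i < p.2) ↔ (p.1 ≤ j ∧ j < p.2)

variable {M}

/-- A chord outside a component of the crossing graph has all vertices of the component on the
same side. -/
theorem between_iff_of_comp_eq {c : M.chords} {s u : Fin n} (hsu : M.comp s = M.comp u)
    (hc : M.crossGraph.connectedComponentMk c ≠ M.comp s) :
    (c.1.1 < s ∧ s < c.1.2) ↔ (c.1.1 < u ∧ u < c.1.2) := by
  have key : ∀ p : M.chords, M.crossGraph.connectedComponentMk c ≠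
      M.crossGraph.connectedComponentMk p →
      (c.1.1 ≠ p.1.1 ∧ c.1.1 ≠ p.1.2 ∧ c.1.2 ≠ p.1.1 ∧ c.1.2 ≠ p.1.2) ∧
      ((c.1.1 < p.1.1 ∧ p.1.1 < c.1.2) ↔ (c.1.1 < p.1.2 ∧ p.1.2 < c.1.2)) := by
    intro p hp
    have hne : ∀ v, (c.1.1 = v ∨ c.1.2 = v) → (p.1.1 = v ∨ p.1.2 = v) → False :=
      fun v h1 h2 => hp (by rw [← M.chordAt_eq h1, ← M.chordAt_eq h2])
    have hadj : ¬ CrossRel c.1 p.1 := fun h =>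
      hp (SimpleGraph.ConnectedComponent.sound
        (SimpleGraph.Adj.reachable (G := M.crossGraph) h))
    have h1 := M.lt _ c.2
    have h2 := M.lt _ p.2
    have h3 := hne c.1.1
    have h4 := hne c.1.2
    simp only [CrossRel, Interleaves] at hadj
    have h5 : c.1.1 ≠ p.1.1 ∧ c.1.1 ≠ p.1.2 ∧ c.1.2 ≠ p.1.1 ∧ c.1.2 ≠ p.1.2 := by grind
    refine ⟨h5, ?_⟩
    obtain ⟨h6, h7, h8, h9⟩ := h5
    simp only [Fin.lt_def, ne_eq, Fin.ext_iff] at *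
    omega
  have step : ∀ p q : M.chords, M.crossGraph.Reachable p q →
      M.crossGraph.connectedComponentMk c ≠ M.crossGraph.connectedComponentMk p →
      ((c.1.1 < p.1.1 ∧ p.1.1 < c.1.2) ↔ (c.1.1 < q.1.1 ∧ q.1.1 < c.1.2)) := by
    rintro p q ⟨W⟩ hp
    induction W with
    | nil => rfl
    | @cons p r q h t ih =>
      have hr : M.crossGraph.connectedComponentMk p = M.crossGraph.connectedComponentMk r :=
        SimpleGraph.ConnectedComponent.sound h.reachable
      rw [← ih (hr ▸ hp)]
      obtain ⟨⟨h1, h2, h3, h4⟩, h5⟩ := key p hp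
      obtain ⟨⟨h6, h7, h8, h9⟩, h10⟩ := key r (hr ▸ hp)
      have h11 := M.lt _ c.2
      replace h : CrossRel p.1 r.1 := h
      simp only [CrossRel, Interleaves, Fin.lt_def, ne_eq, Fin.ext_iff] at *
      omega
  have hend : ∀ v, M.comp v = M.comp s → ((c.1.1 < v ∧ v < c.1.2) ↔
      (c.1.1 < (M.chordAt v).1.1 ∧ (M.chordAt v).1.1 < c.1.2)) := by
    intro v hv
    have h := (key (M.chordAt v) (by rw [← hv] at hc; exact hc)).2
    rcases M.chordAt_spec v with h1 | h1
    · rw [h1]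
    · rw [h, h1]
  rw [hend s rfl, hend u hsu.symm]
  exact step _ _ (SimpleGraph.ConnectedComponent.exact hsu) hc

/-- If `s` and `u` are the first and the last vertex of a component of the crossing graph, then
no chord separates the arc before `s` from the arc after `u`. -/
theorem unseparated_of_extremal {i s u : Fin n} (his : (i : ℕ) + 1 = s)
    (hsu : M.comp s = M.comp u) (hext : ∀ v, M.comp v = M.comp s → s ≤ v ∧ v ≤ u) :
    M.Unseparated i u := by
  intro p hp
  have hlt := M.lt p hp
  lift p to M.chords using hp
  by_cases hc : M.crossGraph.connectedComponentMk p = M.comp s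
  · have h1 := hext p.1.1 (by rw [comp_fst, hc])
    have h2 := hext p.1.2 (by rw [comp_snd, hc])
    simp only [Fin.le_def, Fin.lt_def] at *
    omega
  · have h := between_iff_of_comp_eq hsu hc
    have h1 : p.1.1 ≠ s := fun h => hc (by rw [← h, comp_fst])
    have h2 : p.1.2 ≠ s := fun h => hc (by rw [← h, comp_snd])
    have h3 : p.1.1 ≠ u := fun h => hc (by rw [hsu, ← h, comp_fst])
    have h4 : p.1.2 ≠ u := fun h => hc (by rw [hsu, ← h, comp_snd])
    simp only [Fin.le_def, Fin.lt_def, ne_eq, Fin.ext_iff] at *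
    omega

theorem exists_extremal (Y : M.crossGraph.ConnectedComponent) :
    ∃ s u, M.comp s = Y ∧ M.comp u = Y ∧ ∀ v, M.comp v = Y → s ≤ v ∧ v ≤ u := by
  classical
  have hne : (Finset.univ.filter fun v => M.comp v = Y).Nonempty := by
    obtain ⟨v, hv⟩ := M.comp_surjective Y
    exact ⟨v, by simpa using hv⟩
  have h1 := Finset.min'_mem _ hne
  have h2 := Finset.max'_mem _ hne
  rw [Finset.mem_filter] at h1 h2
  exact ⟨_, _, h1.2, h2.2, fun v hv =>
    ⟨Finset.min'_le _ _ (by simpa using hv), Finset.le_max' _ _ (by simpa using hv)⟩⟩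

/-- If the crossing graph is disconnected, each of its components has a vertex such that the arc
following it is not separated from some other arc. -/
theorem exists_unseparated [Nontrivial M.crossGraph.ConnectedComponent]
    (Y : M.crossGraph.ConnectedComponent) :
    ∃ v, M.comp v = Y ∧ ∃ w, w ≠ v ∧ M.Unseparated v w := by
  classical
  obtain ⟨s, u, hs, hu, hext⟩ := exists_extremal Y
  by_cases h0 : (s : ℕ) = 0
  · obtain ⟨Z, hZ⟩ := exists_ne Y
    obtain ⟨z, hz⟩ := M.comp_surjective Z
    have hex : ∃ t : ℕ, ∃ h : t < n, M.comp ⟨t, h⟩ ≠ Y := ⟨z, z.2, by rwa [Fin.eta, hz]⟩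
    obtain ⟨ht, htY⟩ := Nat.find_spec hex
    have hmin : ∀ v : Fin n, (v : ℕ) < Nat.find hex → M.comp v = Y := fun v hv => by
      by_contra hvY
      exact Nat.find_min hex hv ⟨v.2, hvY⟩
    generalize Nat.find hex = t at *
    have ht0 : t ≠ 0 := by
      rintro rfl
      exact htY (by rw [← hs]; congr 1; exact Fin.ext h0.symm)
    let v : Fin n := ⟨t - 1, by omega⟩
    have hvY : M.comp v = Y := hmin v (by simp only [v]; omega)
    obtain ⟨s', u', hs', hu', hext'⟩ := exists_extremal (M.comp ⟨t, ht⟩)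
    have hst : s' = ⟨t, ht⟩ := by
      refine le_antisymm (hext' _ rfl).1 ?_
      by_contra! hlt
      exact htY (by rw [← hs', hmin s' hlt])
    refine ⟨v, hvY, u', ?_, unseparated_of_extremal (s := s') ?_ (hs'.trans hu'.symm) ?_⟩
    · rintro rfl
      exact htY (hu' ▸ hvY)
    · simp only [hst, v]; omega
    · rwa [hs']
  · refine ⟨u, hu, ⟨s - 1, by omega⟩, ?_, fun p hp => Iff.symm ?_⟩
    · have := (hext u hu).1
      simp only [ne_eq, Fin.ext_iff, Fin.le_def] at *
      omega
    · refine unseparated_of_extremal (s := s) ?_ (hs.trans hu.symm) (by rwa [hs]) p hp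
      simp only
      omega

/-- The number of arcs that are separated from every other arc is at most `3k + 1`, where `k` is
the number of crossings, with equality only for `k = 1`. -/
theorem card_separated_le (hcore : IsCoreMatching M) {k : ℕ} (hk : crossNum M.chords = k)
    (hk1 : 1 ≤ k) :
    Nat.card {v : Fin n // ∀ w, w ≠ v → ¬ M.Unseparated v w} ≤ 3 * k + 1 ∧
      (Nat.card {v : Fin n // ∀ w, w ≠ v → ¬ M.Unseparated v w} = 3 * k + 1 → k = 1) := by
  have h1 := M.card_le_two_mul_card_chords
  have h2 := M.crossGraph.card_vert_le_card_edgeSet_add_card_connectedComponent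
  have h3 := M.card_edgeSet_crossGraph_le
  have h4 := M.card_connectedComponent_le_card_edgeSet hcore
  rw [Nat.card_eq_finsetCard] at h2
  rcases Nat.lt_or_ge 1 (Nat.card M.crossGraph.ConnectedComponent) with hc | hc
  · have := Finite.one_lt_card_iff_nontrivial.1 hc
    choose f hf w hw using exists_unseparated (M := M)
    have hinj : Function.Injective (Sum.elim f
        (Subtype.val : {v : Fin n // ∀ w, w ≠ v → ¬ M.Unseparated v w} → Fin n)) := by
      refine Function.Injective.sumElim (fun Y Z h => ?_) Subtype.val_injective fun Y x h => ?_
      · rw [← hf Y, h, hf Z]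
      · have := hw Y
        rw [h] at this
        exact x.2 _ this.1 this.2
    have h5 := Nat.card_le_card_of_injective _ hinj
    rw [Nat.card_sum, Nat.card_fin] at h5
    omega
  · have h5 := Nat.card_le_card_of_injective
      (Subtype.val : {v : Fin n // ∀ w, w ≠ v → ¬ M.Unseparated v w} → Fin n)
      Subtype.val_injective
    rw [Nat.card_fin] at h5
    omega

end CircMatching

/-- The point of the unit circle at position `x`, the positions being scaled so that a full turn
has length `n`. -/
noncomputable def circPos (n : ℕ) (x : ℝ) : ℂ :=
  Complex.exp (((2 * Real.pi * x / n : ℝ) : ℂ) * Complex.I)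

theorem circPt_eq_circPos {n : ℕ} (j : Fin n) : circPt n j = circPos n ((j : ℕ) : ℝ) := by
  rw [circPt, circPos]
  congr 1
  push_cast
  ring

theorem circPos_mem_sphere (n : ℕ) (x : ℝ) : circPos n x ∈ Metric.sphere (0 : ℂ) 1 := by
  rw [mem_sphere_zero_iff_norm, circPos, Complex.norm_exp_ofReal_mul_I]

theorem exists_circPos_eq {n : ℕ} (hn : 0 < n) {z : ℂ} (hz : z ∈ Metric.sphere (0 : ℂ) 1) :
    ∃ x : ℝ, 0 ≤ x ∧ x < n ∧ circPos n x = z := by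
  rw [mem_sphere_zero_iff_norm] at hz
  have hn' : (0 : ℝ) < n := by exact_mod_cast hn
  have hpi := Real.pi_pos
  have hz' : Complex.exp (z.arg * Complex.I) = z := by
    simpa [hz] using Complex.norm_mul_exp_arg_mul_I z
  have hmain : ∀ t : ℝ, 0 ≤ t → t < 2 * Real.pi → Complex.exp (t * Complex.I) = z →
      ∃ x : ℝ, 0 ≤ x ∧ x < n ∧ circPos n x = z := by
    intro t h0 h1 ht
    refine ⟨t * n / (2 * Real.pi), by positivity, ?_, ?_⟩
    · rw [div_lt_iff₀ (by positivity)]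
      nlinarith
    · rw [circPos, ← ht]
      congr 3
      field_simp
  rcases le_or_gt 0 z.arg with h | h
  · exact hmain z.arg h (by linarith [Complex.arg_le_pi z]) hz'
  · refine hmain (z.arg + 2 * Real.pi) (by linarith [Complex.neg_pi_lt_arg z]) (by linarith) ?_
    push_cast
    rw [add_mul, Complex.exp_add, hz', Complex.exp_two_pi_mul_I, mul_one]

/-- An affine function of `z` vanishing on the line through the points of the circle at the
positions `a` and `b`. -/
noncomputable def chordSide (n : ℕ) (a b : ℝ) (z : ℂ) : ℝ :=
  Real.cos (Real.pi * (b - a) / n) - z.re * Real.cos (Real.pi * (a + b) / n)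
    - z.im * Real.sin (Real.pi * (a + b) / n)

theorem continuous_chordSide (n : ℕ) (a b : ℝ) : Continuous (chordSide n a b) := by
  unfold chordSide
  fun_prop

theorem chordSide_combo (n : ℕ) (a b : ℝ) (z w : ℂ) {s t : ℝ} (hst : s + t = 1) :
    chordSide n a b (s • z + t • w) = s * chordSide n a b z + t * chordSide n a b w := by
  obtain rfl : t = 1 - s := by linarith
  simp only [chordSide, Complex.add_re, Complex.add_im, Complex.smul_re, Complex.smul_im,
    smul_eq_mul]
  ring

theorem chordSide_circPos (n : ℕ) (a b x : ℝ) :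
    chordSide n a b (circPos n x) =
      2 * Real.sin (Real.pi * (x - a) / n) * Real.sin (Real.pi * (x - b) / n) := by
  have h1 : 2 * Real.pi * x / n = Real.pi * (x - a) / n + Real.pi * (x - b) / n
      + Real.pi * (a + b) / n := by ring
  have h2 : Real.pi * (b - a) / n = Real.pi * (x - a) / n - Real.pi * (x - b) / n := by ring
  rw [chordSide, circPos, Complex.exp_ofReal_mul_I_re, Complex.exp_ofReal_mul_I_im, h1, h2,
    Real.cos_add (_ + _), Real.sin_add (_ + _), Real.cos_sub, ← sub_eq_zero]
  generalize Real.pi * (a + b) / n = C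
  have h3 := Real.sin_sq_add_cos_sq C
  have h4 := Real.cos_add (Real.pi * (x - a) / n) (Real.pi * (x - b) / n)
  linear_combination (-Real.cos (Real.pi * (x - a) / n + Real.pi * (x - b) / n)) * h3 - h4

section

variable {n : ℕ} {a b x : ℝ}

theorem sin_pos_of_circPos_lt (hn : 0 < n) (hax : a < x) (ha : 0 ≤ a) (hx : x < n) :
    0 < Real.sin (Real.pi * (x - a) / n) := by
  have hn' : (0 : ℝ) < n := by exact_mod_cast hn
  have := Real.pi_pos
  refine Real.sin_pos_of_pos_of_lt_pi (div_pos (mul_pos this (by linarith)) hn') ?_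
  rw [div_lt_iff₀ hn']
  nlinarith

theorem sin_neg_of_circPos_lt (hn : 0 < n) (hax : x < a) (hx : 0 ≤ x) (ha : a < n) :
    Real.sin (Real.pi * (x - a) / n) < 0 := by
  have h := sin_pos_of_circPos_lt hn hax hx ha
  have h2 : Real.pi * (x - a) / n = -(Real.pi * (a - x) / n) := by ring
  rw [h2, Real.sin_neg]
  linarith

theorem chordSide_circPos_left : chordSide n a b (circPos n a) = 0 := by
  simp [chordSide_circPos]

theorem chordSide_circPos_right : chordSide n a b (circPos n b) = 0 := by
  simp [chordSide_circPos]

theorem chordSide_circPos_neg (hn : 0 < n) (ha : 0 ≤ a) (hb : b < n) (hax : a < x) (hxb : x < b) :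
    chordSide n a b (circPos n x) < 0 := by
  rw [chordSide_circPos]
  exact mul_neg_of_pos_of_neg
    (mul_pos two_pos (sin_pos_of_circPos_lt hn hax ha (hxb.trans hb)))
    (sin_neg_of_circPos_lt hn hxb (ha.trans hax.le) hb)

theorem chordSide_circPos_pos (hn : 0 < n) (ha : 0 ≤ a) (hb : b < n) (hab : a < b) (hx0 : 0 ≤ x)
    (hxn : x < n) (h : x < a ∨ b < x) : 0 < chordSide n a b (circPos n x) := by
  rw [chordSide_circPos]
  rcases h with h | h
  · exact mul_pos_of_neg_of_neg
      (mul_neg_of_pos_of_neg two_pos (sin_neg_of_circPos_lt hn h hx0 (hab.trans hb)))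
      (sin_neg_of_circPos_lt hn (h.trans hab) hx0 hb)
  · exact mul_pos
      (mul_pos two_pos (sin_pos_of_circPos_lt hn (hab.trans h) ha hxn))
      (sin_pos_of_circPos_lt hn h (ha.trans hab.le) hxn)

end

namespace CircMatching

variable {n : ℕ} {M : CircMatching n}

theorem circPt_notMem_diskComplement (j : Fin n) : circPt n j ∉ diskComplement M.chords := by
  rintro ⟨-, h⟩
  obtain ⟨p, ⟨hp, hpj⟩, -⟩ := M.mem_unique j
  refine h (Set.mem_biUnion hp ?_)
  rcases hpj with rfl | rfl
  · exact left_mem_segment ℝ _ _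
  · exact right_mem_segment ℝ _ _

theorem chordSide_eq_zero_of_mem_chordSeg {p : Fin n × Fin n} {z : ℂ} (hz : z ∈ chordSeg n p) :
    chordSide n (p.1 : ℕ) (p.2 : ℕ) z = 0 := by
  obtain ⟨s, t, -, -, hst, rfl⟩ := hz
  rw [chordSide_combo _ _ _ _ _ hst, circPt_eq_circPos, circPt_eq_circPos,
    chordSide_circPos_left, chordSide_circPos_right]
  simp

/-- Two points of the circle inside unseparated arcs lie in the same region. -/
theorem mem_connectedComponentIn_of_unseparated {i j : Fin n} (hij : M.Unseparated i j) {x y : ℝ}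
    (hix : (i : ℕ) < x) (hxi : x < (i : ℕ) + 1) (hjy : (j : ℕ) < y) (hyj : y < (j : ℕ) + 1) :
    circPos n y ∈ connectedComponentIn (diskComplement M.chords) (circPos n x) := by
  have hn : 0 < n := i.pos
  have hneg : ∀ (v : Fin n) (z : ℝ), (v : ℕ) < z → z < (v : ℕ) + 1 → ∀ p ∈ M.chords,
      (p.1 ≤ v ∧ v < p.2) → chordSide n (p.1 : ℕ) (p.2 : ℕ) (circPos n z) < 0 := by
    rintro v z h1 h2 p - ⟨h3, h4⟩
    have h3' : ((p.1 : ℕ) : ℝ) ≤ (v : ℕ) := by exact_mod_cast h3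
    have h4' : ((v : ℕ) : ℝ) + 1 ≤ (p.2 : ℕ) := by exact_mod_cast h4
    exact chordSide_circPos_neg hn (by positivity) (by exact_mod_cast p.2.2)
      (by linarith) (by linarith)
  have hpos : ∀ (v : Fin n) (z : ℝ), (v : ℕ) < z → z < (v : ℕ) + 1 → ∀ p ∈ M.chords,
      ¬ (p.1 ≤ v ∧ v < p.2) → 0 < chordSide n (p.1 : ℕ) (p.2 : ℕ) (circPos n z) := by
    intro v z h1 h2 p hp h3
    have hv : ((v : ℕ) : ℝ) + 1 ≤ n := by exact_mod_cast v.2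
    have hv0 : (0 : ℝ) ≤ (v : ℕ) := by positivity
    refine chordSide_circPos_pos hn (by positivity) (by exact_mod_cast p.2.2)
      (by exact_mod_cast M.lt p hp) (by linarith) (by linarith) ?_
    rw [not_and_or, not_le, not_lt] at h3
    rcases h3 with h3 | h3
    · have h3' : ((v : ℕ) : ℝ) + 1 ≤ (p.1 : ℕ) := by exact_mod_cast h3
      exact Or.inl (by linarith)
    · have h3' : ((p.2 : ℕ) : ℝ) ≤ (v : ℕ) := by exact_mod_cast h3
      exact Or.inr (by linarith)
  have hseg : segment ℝ (circPos n x) (circPos n y) ⊆ diskComplement M.chords := by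
    intro z hz
    refine ⟨(convex_closedBall (0 : ℂ) 1).segment_subset
      (Metric.sphere_subset_closedBall (circPos_mem_sphere n x))
      (Metric.sphere_subset_closedBall (circPos_mem_sphere n y)) hz, fun hmem => ?_⟩
    simp only [Set.mem_iUnion] at hmem
    obtain ⟨p, hp, hzp⟩ := hmem
    have h0 := chordSide_eq_zero_of_mem_chordSeg hzp
    obtain ⟨s, t, hs, ht, hst, rfl⟩ := hz
    rw [chordSide_combo _ _ _ _ _ hst] at h0
    by_cases hi : p.1 ≤ i ∧ i < p.2
    · have h1 := hneg i x hix hxi p hp hi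
      have h2 := hneg j y hjy hyj p hp ((hij p hp).1 hi)
      rcases hs.eq_or_lt with rfl | hs
      · nlinarith
      · nlinarith [mul_nonneg ht (neg_nonneg.2 h2.le), mul_pos hs (neg_pos.2 h1)]
    · have h1 := hpos i x hix hxi p hp hi
      have h2 := hpos j y hjy hyj p hp (fun h => hi ((hij p hp).2 h))
      rcases hs.eq_or_lt with rfl | hs
      · nlinarith
      · nlinarith [mul_nonneg ht h2.le, mul_pos hs h1]
  exact (convex_segment _ _).isPreconnected.subset_connectedComponentIn
    (left_mem_segment ℝ _ _) hseg (right_mem_segment ℝ _ _)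

/-- The midpoint of the arc following a vertex. -/
noncomputable def arcMid (j : Fin n) : ℂ := circPos n ((j : ℕ) + 1 / 2)

/-- A region that meets the circle contains the midpoint of an arc. -/
theorem exists_arcMid_mem {C : Set ℂ} (hC : C ∈ regions M.chords) (hn : 0 < n)
    (hne : (C ∩ Metric.sphere (0 : ℂ) 1).Nonempty) :
    ∃ j : Fin n, arcMid j ∈ C ∧ C = connectedComponentIn (diskComplement M.chords) (arcMid j) := by
  obtain ⟨z, hzC, hz⟩ := hne
  obtain ⟨w, -, rfl⟩ := hC
  obtain ⟨x, hx0, hxn, rfl⟩ := exists_circPos_eq hn hz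
  have hfl : ⌊x⌋₊ < n := (Nat.floor_lt hx0).2 hxn
  have hlt : (⌊x⌋₊ : ℝ) < x := by
    refine (Nat.floor_le hx0).lt_of_ne fun h => ?_
    refine circPt_notMem_diskComplement (M := M) ⟨⌊x⌋₊, hfl⟩ ?_
    rw [circPt_eq_circPos]
    dsimp only
    rw [h]
    exact connectedComponentIn_subset _ _ hzC
  have hmem := mem_connectedComponentIn_of_unseparated (M := M) (i := ⟨⌊x⌋₊, hfl⟩)
    (j := ⟨⌊x⌋₊, hfl⟩) (fun _ _ => Iff.rfl) (x := x) (y := ⌊x⌋₊ + 1 / 2) hlt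
    (Nat.lt_floor_add_one x) (by dsimp only; linarith) (by dsimp only; linarith)
  rw [← connectedComponentIn_eq hzC] at hmem
  exact ⟨⟨⌊x⌋₊, hfl⟩, hmem, connectedComponentIn_eq hmem⟩

/-- A region containing the midpoints of two different arcs has a disconnected trace on the
circle. -/
theorem not_isPreconnected_of_arcMid_mem {C : Set ℂ} (hC : C ⊆ diskComplement M.chords)
    {i j : Fin n} (hij : i < j) (hi : arcMid i ∈ C) (hj : arcMid j ∈ C) :
    ¬ IsPreconnected (C ∩ Metric.sphere (0 : ℂ) 1) := by
  intro hpre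
  have hn : 0 < n := i.pos
  have hi0 : (0 : ℝ) ≤ (i : ℕ) := by positivity
  have hij' : ((i : ℕ) : ℝ) + 1 ≤ (j : ℕ) := by exact_mod_cast hij
  have hjn : ((j : ℕ) : ℝ) + 1 ≤ n := by exact_mod_cast j.2
  have h1 : chordSide n (i : ℕ) (j : ℕ) (arcMid i) < 0 :=
    chordSide_circPos_neg hn hi0 (by linarith) (by linarith) (by linarith)
  have h2 : 0 < chordSide n (i : ℕ) (j : ℕ) (arcMid j) :=
    chordSide_circPos_pos hn hi0 (by linarith) (by linarith) (by linarith) (by linarith)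
      (Or.inr (by linarith))
  obtain ⟨z, ⟨hzC, hz⟩, hz0⟩ := hpre.intermediate_value
    (f := chordSide n (i : ℕ) (j : ℕ)) ⟨hi, circPos_mem_sphere n _⟩ ⟨hj, circPos_mem_sphere n _⟩
    (continuous_chordSide n _ _).continuousOn ⟨h1.le, h2.le⟩
  obtain ⟨x, hx0, hxn, rfl⟩ := exists_circPos_eq hn hz
  have hne : ∀ v : Fin n, x ≠ (v : ℕ) := fun v h =>
    circPt_notMem_diskComplement (M := M) v (by rw [circPt_eq_circPos, ← h]; exact hC hzC)
  rcases lt_or_gt_of_ne (hne i) with h3 | h3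
  · exact (chordSide_circPos_pos hn hi0 (by linarith) (by linarith) hx0 hxn (Or.inl h3)).ne' hz0
  rcases lt_or_gt_of_ne (hne j) with h4 | h4
  · exact (chordSide_circPos_neg hn hi0 (by linarith) h3 h4).ne hz0
  · exact (chordSide_circPos_pos hn hi0 (by linarith) (by linarith) hx0 hxn (Or.inr h4)).ne' hz0

theorem nReg_one_le_card_separated (hn : 0 < n) :
    nReg M.chords 1 ≤ Nat.card {v : Fin n // ∀ w, w ≠ v → ¬ M.Unseparated v w} := by
  have key : ∀ C : {C : Set ℂ // C ∈ regions M.chords ∧ arcCount C = 1},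
      ∃ v : {v : Fin n // ∀ w, w ≠ v → ¬ M.Unseparated v w},
        C.1 = connectedComponentIn (diskComplement M.chords) (arcMid v.1) := by
    rintro ⟨C, hC, hcard⟩
    obtain ⟨hsub, ⟨c⟩⟩ := Nat.card_eq_one_iff_unique.1 hcard
    obtain ⟨c, -⟩ := ConnectedComponents.surjective_coe c
    obtain ⟨v, hv, hCv⟩ := exists_arcMid_mem hC hn ⟨c.1, c.2⟩
    have hpre : IsPreconnected (C ∩ Metric.sphere (0 : ℂ) 1) := by
      rw [isPreconnected_iff_preconnectedSpace, preconnectedSpace_iff_connectedComponent]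
      refine fun x => Set.eq_univ_of_forall fun y => ?_
      exact ConnectedComponents.coe_eq_coe'.1 (Subsingleton.elim _ _)
    have hCsub : C ⊆ diskComplement M.chords := by
      rw [hCv]
      exact connectedComponentIn_subset _ _
    refine ⟨⟨v, fun w hwv hvw => ?_⟩, hCv⟩
    have hw : arcMid w ∈ C := by
      rw [hCv]
      exact mem_connectedComponentIn_of_unseparated hvw (by linarith) (by linarith)
        (by linarith) (by linarith)
    rcases lt_or_gt_of_ne hwv with h | h
    · exact not_isPreconnected_of_arcMid_mem hCsub h hw hv hpre
    · exact not_isPreconnected_of_arcMid_mem hCsub h hv hw hpre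
  choose f hf using key
  exact Nat.card_le_card_of_injective f fun C D h => Subtype.ext (by rw [hf C, h, ← hf D])

end CircMatching

/-- For any core matching `K` with `k(K) ≥ 1` crossings, the number `n₁(K)` of
regions of `K` with exactly one boundary arc satisfies `n₁(K) ≤ 3 k(K) + 1`,
with equality only when `k(K) = 1`. -/
theorem coreMatching_nReg_one_le {n k : ℕ} (M : CircMatching n)
    (hcore : IsCoreMatching M) (hk : crossNum M.chords = k) (hk1 : 1 ≤ k) :
    nReg M.chords 1 ≤ 3 * k + 1 ∧ (nReg M.chords 1 = 3 * k + 1 → k = 1) := by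
  have hn : 0 < n := by
    rcases Nat.eq_zero_or_pos n with rfl | h
    · have h0 : crossNum M.chords = 0 := by
        simp [crossNum, Finset.eq_empty_of_isEmpty M.chords]
      omega
    · exact h
  have h1 := CircMatching.nReg_one_le_card_separated (M := M) hn
  obtain ⟨h2, h3⟩ := CircMatching.card_separated_le hcore hk hk1
  exact ⟨h1.trans h2, fun h => h3 (le_antisymm h2 (h ▸ h1))⟩
end

section
/- For any core matching K with k = k(K) ≥ 2 crossings, the potential Φ(K) = Σ_{i>1} (2i−3)·n_i(K) satisfies Φ(K) ≤ 2k − 3, with equality if and only if n_1(K) = 3k, n_k(K) = 1, and n_i(K) = 0 for all i ∉ {1, k}. -/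
/-- The point of the unit circle at real position `t`, the full turn having length `n`. -/
noncomputable def circleAt (n : ℕ) (t : ℝ) : ℂ :=
  ⟨Real.cos (2 * Real.pi * t / n), Real.sin (2 * Real.pi * t / n)⟩

/-- The affine functional vanishing on the line through the points at positions `a` and `b`. -/
noncomputable def lineFun (n : ℕ) (a b : ℝ) (z : ℂ) : ℝ :=
  z.re * Real.cos (Real.pi * (a + b) / n) + z.im * Real.sin (Real.pi * (a + b) / n)
    - Real.cos (Real.pi * (b - a) / n)

theorem circPt_eq_circleAt (n : ℕ) (j : Fin n) : circPt n j = circleAt n (j : ℕ) := by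
  have h : 2 * (Real.pi : ℂ) * Complex.I * ((j : ℕ) : ℂ) / ((n : ℕ) : ℂ)
      = ((2 * Real.pi * (j : ℕ) / n : ℝ) : ℂ) * Complex.I := by
    push_cast; ring
  unfold circPt circleAt
  rw [h]
  apply Complex.ext
  · rw [Complex.exp_ofReal_mul_I_re]
  · rw [Complex.exp_ofReal_mul_I_im]

theorem continuous_circleAt (n : ℕ) : Continuous (circleAt n) := by
  have h : circleAt n = fun t : ℝ =>
      Complex.exp (((2 * Real.pi * t / n : ℝ) : ℂ) * Complex.I) := by
    funext t
    apply Complex.ext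
    · rw [Complex.exp_ofReal_mul_I_re]; rfl
    · rw [Complex.exp_ofReal_mul_I_im]; rfl
  rw [h]
  fun_prop

theorem circleAt_mem_sphere (n : ℕ) (t : ℝ) : circleAt n t ∈ Metric.sphere (0 : ℂ) 1 := by
  rw [mem_sphere_zero_iff_norm, Complex.norm_def, Complex.normSq_apply]
  simp only [circleAt]
  rw [← sq, ← sq, Real.cos_sq_add_sin_sq, Real.sqrt_one]

theorem continuous_lineFun (n : ℕ) (a b : ℝ) : Continuous (lineFun n a b) := by
  unfold lineFun
  fun_prop

theorem lineFun_combo (n : ℕ) (a b : ℝ) (z w : ℂ) {α β : ℝ} (h : α + β = 1) :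
    lineFun n a b (α • z + β • w) = α * lineFun n a b z + β * lineFun n a b w := by
  have hβ : β = 1 - α := by linarith
  subst hβ
  simp only [lineFun, Complex.add_re, Complex.add_im, Complex.real_smul, Complex.mul_re,
    Complex.mul_im, Complex.ofReal_re, Complex.ofReal_im]
  ring

theorem lineFun_circleAt (n : ℕ) (a b t : ℝ) :
    lineFun n a b (circleAt n t)
      = 2 * (Real.sin (Real.pi * (t - a) / n) * Real.sin (Real.pi * (b - t) / n)) := by
  have h3 := Real.cos_sub_cos (2 * Real.pi * t / n - Real.pi * (a + b) / n)
    (Real.pi * (b - a) / n)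
  have h4 := Real.cos_sub (2 * Real.pi * t / n) (Real.pi * (a + b) / n)
  have h5 : Real.sin (Real.pi * (b - t) / n) = - Real.sin
      ((2 * Real.pi * t / n - Real.pi * (a + b) / n - Real.pi * (b - a) / n) / 2) := by
    rw [← Real.sin_neg]; congr 1; ring
  have h6 : Real.pi * (t - a) / n =
      (2 * Real.pi * t / n - Real.pi * (a + b) / n + Real.pi * (b - a) / n) / 2 := by ring
  rw [h5, h6]
  simp only [lineFun, circleAt]
  rw [← h4]
  linarith [h3]

theorem sin_pos_of_position {n : ℕ} {x : ℝ} (h0 : 0 < x) (h1 : x < n) :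
    0 < Real.sin (Real.pi * x / n) := by
  have hn : (0 : ℝ) < n := h0.trans h1
  apply Real.sin_pos_of_pos_of_lt_pi
  · have := Real.pi_pos; positivity
  · rw [div_lt_iff₀ hn]
    exact mul_lt_mul_of_pos_left h1 Real.pi_pos

theorem sin_nonneg_of_position {n : ℕ} {x : ℝ} (h0 : 0 ≤ x) (h1 : x ≤ n) :
    0 ≤ Real.sin (Real.pi * x / n) := by
  rcases h0.eq_or_lt with rfl | h0
  · simp
  have hn : (0 : ℝ) < n := h0.trans_le h1
  apply Real.sin_nonneg_of_nonneg_of_le_pi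
  · have := Real.pi_pos; positivity
  · rw [div_le_iff₀ hn]
    exact mul_le_mul_of_nonneg_left h1 Real.pi_pos.le

theorem lineFun_circleAt_pos_iff {n : ℕ} {a b t : ℝ} (ha : 0 ≤ a) (hb : b ≤ n)
    (ht0 : 0 ≤ t) (htn : t < n) (hab : a < b) (hba : b - a < n) :
    0 < lineFun n a b (circleAt n t) ↔ a < t ∧ t < b := by
  rw [lineFun_circleAt]
  constructor
  · intro h
    by_contra hc
    rw [not_and_or, not_lt, not_lt] at hc
    have hneg : ∀ x : ℝ, Real.sin (Real.pi * (-x) / n) = - Real.sin (Real.pi * x / n) := by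
      intro x; rw [← Real.sin_neg]; congr 1; ring
    rcases hc with hc | hc
    · have h1 := sin_nonneg_of_position (n := n) (x := a - t) (by linarith) (by linarith)
      have h2 := sin_nonneg_of_position (n := n) (x := b - t) (by linarith) (by linarith)
      have h3 := hneg (a - t)
      rw [neg_sub] at h3
      rw [h3] at h
      nlinarith
    · have h1 := sin_nonneg_of_position (n := n) (x := t - a) (by linarith) (by linarith)
      have h2 := sin_nonneg_of_position (n := n) (x := t - b) (by linarith) (by linarith)
      have h3 := hneg (t - b)
      rw [neg_sub] at h3
      rw [h3] at h
      nlinarith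
  · rintro ⟨h1, h2⟩
    have h3 := sin_pos_of_position (n := n) (x := t - a) (by linarith) (by linarith)
    have h4 := sin_pos_of_position (n := n) (x := b - t) (by linarith) (by linarith)
    positivity

theorem mem_chordSeg_iff {n : ℕ} {p : Fin n × Fin n} (hp : p.1 < p.2) {z : ℂ}
    (hz : z ∈ Metric.closedBall (0 : ℂ) 1) :
    z ∈ chordSeg n p ↔ lineFun n (p.1 : ℕ) (p.2 : ℕ) z = 0 := by
  unfold chordSeg
  rw [circPt_eq_circleAt, circPt_eq_circleAt]
  constructor
  · rintro ⟨α, β, -, -, hαβ, rfl⟩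
    rw [lineFun_combo n _ _ _ _ hαβ, lineFun_circleAt, lineFun_circleAt]
    simp
  · intro h
    have h1 : ((p.1 : ℕ) : ℝ) < (p.2 : ℕ) := by exact_mod_cast hp
    have h2 : ((p.2 : ℕ) : ℝ) < n := by exact_mod_cast p.2.isLt
    have h0 : (0 : ℝ) ≤ (p.1 : ℕ) := by positivity
    generalize ((p.1 : ℕ) : ℝ) = a at *
    generalize ((p.2 : ℕ) : ℝ) = b at *
    have hs := sin_pos_of_position (n := n) (x := b - a) (by linarith) (by linarith)
    have ea : 2 * Real.pi * a / n = Real.pi * (a + b) / n - Real.pi * (b - a) / n := by ring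
    have eb : 2 * Real.pi * b / n = Real.pi * (a + b) / n + Real.pi * (b - a) / n := by ring
    have hz' : z.re * z.re + z.im * z.im ≤ 1 := by
      rw [mem_closedBall_zero_iff, Complex.norm_def, Complex.normSq_apply] at hz
      exact Real.sqrt_le_one.mp hz
    unfold circleAt
    rw [ea, eb]
    simp only [lineFun] at h
    have hcs := Real.cos_sq_add_sin_sq (Real.pi * (a + b) / n)
    have hds := Real.cos_sq_add_sin_sq (Real.pi * (b - a) / n)
    rw [Real.cos_sub, Real.cos_add, Real.sin_sub, Real.sin_add]
    generalize Real.cos (Real.pi * (a + b) / n) = c at *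
    generalize Real.sin (Real.pi * (a + b) / n) = s at *
    generalize Real.cos (Real.pi * (b - a) / n) = d at *
    generalize Real.sin (Real.pi * (b - a) / n) = e at *
    have hd : d = z.re * c + z.im * s := by linarith
    have hy2 : (z.im * c - z.re * s) ^ 2 ≤ e ^ 2 := by
      have : (z.im * c - z.re * s) ^ 2 + d ^ 2 = z.re * z.re + z.im * z.im := by
        rw [hd]
        linear_combination (z.re * z.re + z.im * z.im) * hcs
      linarith
    obtain ⟨y, hy⟩ : ∃ y, y = z.im * c - z.re * s := ⟨_, rfl⟩
    rw [← hy] at hy2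
    obtain ⟨hl, hu⟩ := abs_le.mp (abs_le_of_sq_le_sq hy2 hs.le)
    have hre : z.re = c * d - s * y := by
      rw [hd, hy]; linear_combination (-z.re) * hcs
    have him : z.im = s * d + c * y := by
      rw [hd, hy]; linear_combination (-z.im) * hcs
    refine ⟨(e - y) / (2 * e), (e + y) / (2 * e), div_nonneg (by linarith) (by linarith),
      div_nonneg (by linarith) (by linarith), by field_simp; ring, ?_⟩
    apply Complex.ext
    · simp only [Complex.add_re, Complex.real_smul, Complex.mul_re, Complex.ofReal_re,
        Complex.ofReal_im]
      rw [hre]; field_simp; ring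
    · simp only [Complex.add_im, Complex.real_smul, Complex.mul_im, Complex.ofReal_re,
        Complex.ofReal_im]
      rw [him]; field_simp; ring

theorem mem_diskComplement_iff {n : ℕ} {D : Finset (Fin n × Fin n)}
    (hD : ∀ p ∈ D, p.1 < p.2) {z : ℂ} :
    z ∈ diskComplement D ↔ z ∈ Metric.closedBall (0 : ℂ) 1 ∧
      ∀ p ∈ D, lineFun n (p.1 : ℕ) (p.2 : ℕ) z ≠ 0 := by
  unfold diskComplement
  simp only [Set.mem_sdiff, Set.mem_iUnion, not_exists]
  refine and_congr_right fun hz => forall₂_congr fun p hp => ?_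
  rw [mem_chordSeg_iff (hD p hp) hz]

theorem mem_connectedComponentIn_diskComplement_iff {n : ℕ} {D : Finset (Fin n × Fin n)}
    (hD : ∀ p ∈ D, p.1 < p.2) {x z : ℂ} (hx : x ∈ diskComplement D) :
    z ∈ connectedComponentIn (diskComplement D) x ↔ z ∈ diskComplement D ∧
      ∀ p ∈ D, (0 < lineFun n (p.1 : ℕ) (p.2 : ℕ) z ↔ 0 < lineFun n (p.1 : ℕ) (p.2 : ℕ) x) := by
  constructor
  · intro h
    have hsub := connectedComponentIn_subset (diskComplement D) x
    refine ⟨hsub h, fun p hp => ?_⟩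
    have key : ∀ u ∈ connectedComponentIn (diskComplement D) x,
        ∀ v ∈ connectedComponentIn (diskComplement D) x,
        0 < lineFun n (p.1 : ℕ) (p.2 : ℕ) u → 0 < lineFun n (p.1 : ℕ) (p.2 : ℕ) v := by
      intro u hu v hv hpos
      by_contra hneg
      obtain ⟨w, hw, hw0⟩ := isPreconnected_connectedComponentIn.intermediate_value hv hu
        (continuous_lineFun n (p.1 : ℕ) (p.2 : ℕ)).continuousOn ⟨not_lt.mp hneg, hpos.le⟩
      exact ((mem_diskComplement_iff hD).mp (hsub hw)).2 p hp hw0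
    have hxm := mem_connectedComponentIn hx
    exact ⟨key z h x hxm, key x hxm z h⟩
  · rintro ⟨hz, hs⟩
    have hconv : Convex ℝ {w : ℂ | w ∈ diskComplement D ∧
        ∀ p ∈ D, (0 < lineFun n (p.1 : ℕ) (p.2 : ℕ) w ↔
          0 < lineFun n (p.1 : ℕ) (p.2 : ℕ) x)} := by
      intro u hu v hv α β hα hβ hαβ
      have hu' := (mem_diskComplement_iff hD).mp hu.1
      have hv' := (mem_diskComplement_iff hD).mp hv.1
      have hside : ∀ p ∈ D,
          lineFun n (p.1 : ℕ) (p.2 : ℕ) (α • u + β • v) ≠ 0 ∧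
          (0 < lineFun n (p.1 : ℕ) (p.2 : ℕ) (α • u + β • v) ↔
            0 < lineFun n (p.1 : ℕ) (p.2 : ℕ) x) := by
        intro p hp
        rw [lineFun_combo n _ _ _ _ hαβ]
        have h1 := hu.2 p hp
        have h2 := hv.2 p hp
        have h3 := hu'.2 p hp
        have h4 := hv'.2 p hp
        by_cases hxp : 0 < lineFun n (p.1 : ℕ) (p.2 : ℕ) x
        · have h5 := h1.mpr hxp
          have h6 := h2.mpr hxp
          have : 0 < α * lineFun n (p.1 : ℕ) (p.2 : ℕ) u + β * lineFun n (p.1 : ℕ) (p.2 : ℕ) v :=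
            (convex_Ioi (0 : ℝ)) h5 h6 hα hβ hαβ
          exact ⟨this.ne', iff_of_true this hxp⟩
        · have h5 := lt_of_le_of_ne (not_lt.mp (mt h1.mp hxp)) h3
          have h6 := lt_of_le_of_ne (not_lt.mp (mt h2.mp hxp)) h4
          have : α * lineFun n (p.1 : ℕ) (p.2 : ℕ) u + β * lineFun n (p.1 : ℕ) (p.2 : ℕ) v < 0 :=
            (convex_Iio (0 : ℝ)) h5 h6 hα hβ hαβ
          exact ⟨this.ne, iff_of_false this.le.not_gt hxp⟩
      exact ⟨(mem_diskComplement_iff hD).mpr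
        ⟨convex_closedBall (0 : ℂ) 1 hu'.1 hv'.1 hα hβ hαβ, fun p hp => (hside p hp).1⟩,
        fun p hp => (hside p hp).2⟩
    exact hconv.isPreconnected.subset_connectedComponentIn (x := x)
      ⟨hx, fun _ _ => Iff.rfl⟩ (fun w hw => hw.1) ⟨hz, hs⟩

theorem exists_circleAt_eq {n : ℕ} (hn : 0 < n) {z : ℂ} (hz : z ∈ Metric.sphere (0 : ℂ) 1) :
    ∃ t : ℝ, 0 ≤ t ∧ t < n ∧ z = circleAt n t := by
  have hn' : (0 : ℝ) < n := by exact_mod_cast hn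
  have h2 := Real.two_pi_pos
  have hm := toIcoMod_mem_Ico h2 0 z.arg
  rw [zero_add] at hm
  have hz1 : ‖z‖ = 1 := mem_sphere_zero_iff_norm.mp hz
  refine ⟨toIcoMod h2 0 z.arg * n / (2 * Real.pi), ?_, ?_, ?_⟩
  · have := hm.1; positivity
  · rw [div_lt_iff₀ h2, mul_comm (n : ℝ)]
    exact mul_lt_mul_of_pos_right hm.2 hn'
  · have e : 2 * Real.pi * (toIcoMod h2 0 z.arg * n / (2 * Real.pi)) / n
        = z.arg - toIcoDiv h2 0 z.arg * (2 * Real.pi) := by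
      have : toIcoMod h2 0 z.arg = z.arg - toIcoDiv h2 0 z.arg * (2 * Real.pi) := by
        rw [toIcoMod, zsmul_eq_mul]
      rw [← this]
      field_simp
    unfold circleAt
    rw [e, Real.cos_sub_int_mul_two_pi, Real.sin_sub_int_mul_two_pi]
    apply Complex.ext
    · have := Complex.norm_mul_cos_arg z
      rw [hz1, one_mul] at this
      exact this.symm
    · have := Complex.norm_mul_sin_arg z
      rw [hz1, one_mul] at this
      exact this.symm

/-- The midpoint of the arc following the `j`-th point. -/
noncomputable def arcMid (n : ℕ) (j : Fin n) : ℂ := circleAt n ((j : ℕ) + 1 / 2)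

theorem lineFun_pos_iff_of_mem_arc {n : ℕ} {p : Fin n × Fin n} (hp : p.1 < p.2) {j : Fin n}
    {t : ℝ} (h0 : ((j : ℕ) : ℝ) < t) (h1 : t < (j : ℕ) + 1) :
    0 < lineFun n (p.1 : ℕ) (p.2 : ℕ) (circleAt n t) ↔ p.1 ≤ j ∧ j < p.2 := by
  have hjn : ((j : ℕ) : ℝ) + 1 ≤ n := by exact_mod_cast j.isLt
  have hj0 : (0 : ℝ) ≤ (j : ℕ) := by positivity
  have h2 : ((p.2 : ℕ) : ℝ) < n := by exact_mod_cast p.2.isLt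
  have h3 : ((p.1 : ℕ) : ℝ) < (p.2 : ℕ) := by exact_mod_cast hp
  have h4 : (0 : ℝ) ≤ (p.1 : ℕ) := by positivity
  rw [lineFun_circleAt_pos_iff h4 h2.le (by linarith) (by linarith) h3 (by linarith)]
  refine and_congr ?_ ?_
  · constructor
    · intro h
      have : ((p.1 : ℕ) : ℝ) < ((j : ℕ) + 1 : ℕ) := by push_cast; linarith
      have := Nat.cast_lt.mp this
      exact Fin.le_def.mpr (by omega)
    · intro h
      have : ((p.1 : ℕ) : ℝ) ≤ (j : ℕ) := by exact_mod_cast h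
      linarith
  · constructor
    · intro h
      have : ((j : ℕ) : ℝ) < (p.2 : ℕ) := by linarith
      exact Fin.lt_def.mpr (Nat.cast_lt.mp this)
    · intro h
      have : ((j : ℕ) : ℝ) + 1 ≤ (p.2 : ℕ) := by exact_mod_cast h
      linarith

theorem circleAt_mem_diskComplement {n : ℕ} {D : Finset (Fin n × Fin n)}
    (hD : ∀ p ∈ D, p.1 < p.2) {j : Fin n} {t : ℝ} (h0 : ((j : ℕ) : ℝ) < t)
    (h1 : t < (j : ℕ) + 1) : circleAt n t ∈ diskComplement D := by
  rw [mem_diskComplement_iff hD]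
  refine ⟨Metric.sphere_subset_closedBall (circleAt_mem_sphere n t), fun p hp => ?_⟩
  have hjn : ((j : ℕ) : ℝ) + 1 ≤ n := by exact_mod_cast j.isLt
  have hj0 : (0 : ℝ) ≤ (j : ℕ) := by positivity
  have hne : ∀ v : Fin n, Real.sin (Real.pi * (t - (v : ℕ)) / n) ≠ 0 := by
    intro v
    have hv0 : (0 : ℝ) ≤ (v : ℕ) := by positivity
    have hvn : ((v : ℕ) : ℝ) < n := by exact_mod_cast v.isLt
    rcases le_or_gt v j with hv | hv
    · have : ((v : ℕ) : ℝ) ≤ (j : ℕ) := by exact_mod_cast hv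
      exact (sin_pos_of_position (by linarith) (by linarith)).ne'
    · have : ((j : ℕ) : ℝ) + 1 ≤ (v : ℕ) := by exact_mod_cast hv
      have h2 := sin_pos_of_position (n := n) (x := (v : ℕ) - t) (by linarith) (by linarith)
      have h3 : Real.pi * (t - (v : ℕ)) / n = - (Real.pi * ((v : ℕ) - t) / n) := by ring
      rw [h3, Real.sin_neg]
      exact (neg_lt_zero.mpr h2).ne
  rw [lineFun_circleAt]
  have h3 : Real.pi * ((p.2 : ℕ) - t) / n = - (Real.pi * (t - (p.2 : ℕ)) / n) := by ring
  rw [h3, Real.sin_neg]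
  exact mul_ne_zero two_ne_zero (mul_ne_zero (hne _) (neg_ne_zero.mpr (hne _)))

/-- The region of `D` adjacent to the `j`-th boundary arc. -/
noncomputable def arcRegion {n : ℕ} (D : Finset (Fin n × Fin n)) (j : Fin n) : Set ℂ :=
  connectedComponentIn (diskComplement D) (arcMid n j)

theorem arcMid_mem_diskComplement {n : ℕ} {D : Finset (Fin n × Fin n)}
    (hD : ∀ p ∈ D, p.1 < p.2) (j : Fin n) : arcMid n j ∈ diskComplement D :=
  circleAt_mem_diskComplement (j := j) hD (by linarith) (by linarith)

theorem arcMid_mem_iff_arcRegion_eq {n : ℕ} {D : Finset (Fin n × Fin n)}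
    (hD : ∀ p ∈ D, p.1 < p.2) {C : Set ℂ} (hC : C ∈ regions D) (j : Fin n) :
    arcMid n j ∈ C ↔ arcRegion D j = C := by
  obtain ⟨x, hx, rfl⟩ := hC
  constructor
  · intro h
    exact (connectedComponentIn_eq h).symm
  · intro h
    rw [← h]
    exact mem_connectedComponentIn (arcMid_mem_diskComplement hD j)

theorem side_iff_of_arcRegion_eq {n : ℕ} {D : Finset (Fin n × Fin n)}
    (hD : ∀ p ∈ D, p.1 < p.2) {i j : Fin n} (h : arcRegion D i = arcRegion D j)
    {p : Fin n × Fin n} (hp : p ∈ D) : (p.1 ≤ i ∧ i < p.2) ↔ (p.1 ≤ j ∧ j < p.2) := by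
  have hi : arcMid n i ∈ arcRegion D j := by
    rw [← h]; exact mem_connectedComponentIn (arcMid_mem_diskComplement hD i)
  have := ((mem_connectedComponentIn_diskComplement_iff hD
    (arcMid_mem_diskComplement hD j)).mp hi).2 p hp
  unfold arcMid at this
  rwa [lineFun_pos_iff_of_mem_arc (j := i) (hD p hp) (by linarith) (by linarith),
    lineFun_pos_iff_of_mem_arc (j := j) (hD p hp) (by linarith) (by linarith)] at this

theorem circleAt_mem_region_iff {n : ℕ} {D : Finset (Fin n × Fin n)}
    (hD : ∀ p ∈ D, p.1 < p.2) {C : Set ℂ} (hC : C ∈ regions D) {j : Fin n} {t : ℝ}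
    (h0 : ((j : ℕ) : ℝ) < t) (h1 : t < (j : ℕ) + 1) :
    circleAt n t ∈ C ↔ arcMid n j ∈ C := by
  obtain ⟨x, hx, rfl⟩ := hC
  rw [mem_connectedComponentIn_diskComplement_iff hD hx,
    mem_connectedComponentIn_diskComplement_iff hD hx]
  refine and_congr (iff_of_true (circleAt_mem_diskComplement hD h0 h1)
    (arcMid_mem_diskComplement hD j)) (forall₂_congr fun p hp => ?_)
  unfold arcMid
  rw [lineFun_pos_iff_of_mem_arc (hD p hp) h0 h1,
    lineFun_pos_iff_of_mem_arc (j := j) (hD p hp) (by linarith) (by linarith)]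

theorem exists_arc_of_mem_diskComplement {n : ℕ} (M : CircMatching n) {z : ℂ}
    (hn : 0 < n) (hz : z ∈ diskComplement M.chords) (hs : z ∈ Metric.sphere (0 : ℂ) 1) :
    ∃ (j : Fin n) (t : ℝ), ((j : ℕ) : ℝ) < t ∧ t < (j : ℕ) + 1 ∧ z = circleAt n t := by
  obtain ⟨t, ht0, htn, rfl⟩ := exists_circleAt_eq hn hs
  have hfl : ⌊t⌋₊ < n := (Nat.floor_lt ht0).mpr htn
  refine ⟨⟨⌊t⌋₊, hfl⟩, t, ?_, Nat.lt_floor_add_one t, rfl⟩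
  refine lt_of_le_of_ne (Nat.floor_le ht0) fun he => ?_
  obtain ⟨p, ⟨hp, hv⟩, -⟩ := M.mem_unique ⟨⌊t⌋₊, hfl⟩
  apply ((mem_diskComplement_iff M.lt).mp hz).2 p hp
  rw [lineFun_circleAt, ← he]
  rcases hv with hv | hv <;> rw [hv] <;> simp

/-- A continuous map to a discrete space with preconnected fibres counts the connected
components of its source by the size of its range. -/
theorem Nat.card_connectedComponents_eq_card_range {X Y : Type*} [TopologicalSpace X]
    [TopologicalSpace Y] [DiscreteTopology Y] {f : X → Y} (hf : Continuous f)
    (hfib : ∀ y, IsPreconnected (f ⁻¹' {y})) :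
    Nat.card (ConnectedComponents X) = Nat.card (Set.range f) := by
  have hinj : Function.Injective hf.connectedComponentsLift := by
    intro a b
    refine Quotient.inductionOn₂ a b fun x y h => ?_
    change f x = f y at h
    refine ConnectedComponents.coe_eq_coe'.mpr ?_
    exact (hfib (f y)).subset_connectedComponent rfl h
  have hrange : Set.range hf.connectedComponentsLift = Set.range f := by
    ext y
    constructor
    · rintro ⟨a, rfl⟩
      induction a using Quotient.inductionOn with | _ x => exact ⟨x, rfl⟩
    · rintro ⟨x, rfl⟩
      exact ⟨(x : ConnectedComponents X), rfl⟩
  rw [← hrange]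
  exact Nat.card_congr (Equiv.ofInjective _ hinj)

theorem arcCount_eq_card {n : ℕ} (M : CircMatching n) (hn : 2 ≤ n) {C : Set ℂ}
    (hC : C ∈ regions M.chords) :
    arcCount C = Nat.card {j : Fin n | arcMid n j ∈ C} := by
  have hn0 : 0 < n := by omega
  have hCsub : C ⊆ diskComplement M.chords := by
    obtain ⟨x, -, rfl⟩ := hC
    exact connectedComponentIn_subset _ _
  have hex : ∀ z : ↥(C ∩ Metric.sphere (0 : ℂ) 1), ∃ j : Fin n, ∃ t : ℝ,
      ((j : ℕ) : ℝ) < t ∧ t < (j : ℕ) + 1 ∧ (z : ℂ) = circleAt n t :=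
    fun z => exists_arc_of_mem_diskComplement M hn0 (hCsub z.2.1) z.2.2
  choose f t hft0 hft1 hzt using hex
  have hpos : ∀ (z : ↥(C ∩ Metric.sphere (0 : ℂ) 1)) (j : Fin n),
      f z = j ↔ 0 < lineFun n (j : ℕ) ((j : ℕ) + 1) (z : ℂ) := by
    intro z j
    have h1 := hft0 z
    have h2 := hft1 z
    have h3 : ((f z : ℕ) : ℝ) + 1 ≤ n := by exact_mod_cast (f z).isLt
    have h4 : (0 : ℝ) ≤ (f z : ℕ) := by positivity
    have h5 : ((j : ℕ) : ℝ) + 1 ≤ n := by exact_mod_cast j.isLt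
    have h6 : (2 : ℝ) ≤ n := by exact_mod_cast hn
    rw [hzt z, lineFun_circleAt_pos_iff (by positivity) h5 (by linarith) (by linarith)
      (by linarith) (by linarith)]
    constructor
    · rintro rfl
      exact ⟨h1, h2⟩
    · rintro ⟨h7, h8⟩
      have h9 : ((f z : ℕ) : ℝ) < ((j : ℕ) + 1 : ℕ) := by push_cast; linarith
      have h10 : ((j : ℕ) : ℝ) < ((f z : ℕ) + 1 : ℕ) := by push_cast; linarith
      have h11 := Nat.cast_lt.mp h9
      have h12 := Nat.cast_lt.mp h10
      exact Fin.ext (by omega)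
  have hcont : Continuous f := by
    rw [continuous_discrete_rng]
    intro j
    have : f ⁻¹' {j} =
        {z : ↥(C ∩ Metric.sphere (0 : ℂ) 1) | 0 < lineFun n (j : ℕ) ((j : ℕ) + 1) (z : ℂ)} := by
      ext z
      exact hpos z j
    rw [this]
    exact isOpen_lt continuous_const
      ((continuous_lineFun n _ _).comp continuous_subtype_val)
  have hfib : ∀ j, IsPreconnected (f ⁻¹' {j}) := by
    intro j
    by_cases hj : arcMid n j ∈ C
    · rw [← Topology.IsInducing.subtypeVal.isPreconnected_image]
      have : (Subtype.val '' (f ⁻¹' {j})) = circleAt n '' Set.Ioo ((j : ℕ) : ℝ) ((j : ℕ) + 1) := by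
        ext w
        constructor
        · rintro ⟨z, rfl, rfl⟩
          exact ⟨t z, ⟨hft0 z, hft1 z⟩, (hzt z).symm⟩
        · rintro ⟨u, ⟨hu0, hu1⟩, rfl⟩
          refine ⟨⟨circleAt n u, (circleAt_mem_region_iff M.lt hC hu0 hu1).mpr hj,
            circleAt_mem_sphere n u⟩, ?_, rfl⟩
          have h4 : (0 : ℝ) ≤ (j : ℕ) := by positivity
          have h5 : ((j : ℕ) : ℝ) + 1 ≤ n := by exact_mod_cast j.isLt
          have h6 : (2 : ℝ) ≤ n := by exact_mod_cast hn
          refine (hpos _ j).mpr ?_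
          exact (lineFun_circleAt_pos_iff h4 h5 (by linarith) (by linarith)
            (by linarith) (by linarith)).mpr ⟨hu0, hu1⟩
      rw [this]
      exact isPreconnected_Ioo.image _ (continuous_circleAt n).continuousOn
    · have : f ⁻¹' {j} = ∅ := by
        rw [Set.eq_empty_iff_forall_notMem]
        rintro z rfl
        apply hj
        rw [← circleAt_mem_region_iff M.lt hC (hft0 z) (hft1 z), ← hzt z]
        exact z.2.1
      rw [this]
      exact isPreconnected_empty
  unfold arcCount
  rw [Nat.card_connectedComponents_eq_card_range hcont hfib]
  congr 2
  ext j
  constructor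
  · rintro ⟨z, rfl⟩
    have := z.2.1
    rw [hzt z, circleAt_mem_region_iff M.lt hC (hft0 z) (hft1 z)] at this
    exact this
  · intro hj
    refine ⟨⟨arcMid n j, hj, circleAt_mem_sphere n _⟩, ?_⟩
    have h4 : (0 : ℝ) ≤ (j : ℕ) := by positivity
    have h5 : ((j : ℕ) : ℝ) + 1 ≤ n := by exact_mod_cast j.isLt
    have h6 : (2 : ℝ) ≤ n := by exact_mod_cast hn
    refine (hpos _ j).mpr ?_
    exact (lineFun_circleAt_pos_iff h4 h5 (by linarith) (by linarith)
      (by linarith) (by linarith)).mpr ⟨by linarith, by linarith⟩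

open Classical in
theorem nReg_eq_card {n : ℕ} (M : CircMatching n) (hn : 2 ≤ n) {i : ℕ} (hi : 1 ≤ i) :
    nReg M.chords i = (((Finset.univ : Finset (Fin n)).image (arcRegion M.chords)).filter
      fun C => (Finset.univ.filter fun j => arcRegion M.chords j = C).card = i).card := by
  have hcount : ∀ C ∈ regions M.chords,
      arcCount C = (Finset.univ.filter fun j => arcRegion M.chords j = C).card := by
    intro C hC
    rw [arcCount_eq_card M hn hC, Nat.card_eq_fintype_card, Fintype.card_subtype]
    congr 1
    ext j
    simp only [Finset.mem_filter, Finset.mem_univ, true_and, Set.mem_ofPred_eq]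
    exact arcMid_mem_iff_arcRegion_eq M.lt hC j
  unfold nReg
  rw [← Set.ncard_coe_finset, ← Nat.card_coe_set_eq]
  refine Nat.card_congr (Equiv.subtypeEquivRight fun C => ?_)
  simp only [Finset.coe_filter, Finset.mem_image, Finset.mem_univ, true_and, Set.mem_ofPred_eq]
  constructor
  · rintro ⟨hC, h⟩
    rw [hcount C hC] at h
    obtain ⟨j, hj⟩ := Finset.card_pos.mp (h ▸ hi : 0 < Finset.card _)
    exact ⟨⟨j, (Finset.mem_filter.mp hj).2⟩, h⟩
  · rintro ⟨⟨j, rfl⟩, h⟩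
    have hC : arcRegion M.chords j ∈ regions M.chords :=
      ⟨arcMid n j, arcMid_mem_diskComplement M.lt j, rfl⟩
    exact ⟨hC, (hcount _ hC).trans h⟩

/-- If the arcs after `b` and `a` lie in the same region, no chord leaves the block of points
strictly after `b` and up to `a`. -/
theorem mem_block_iff_of_arcRegion_eq {n : ℕ} (M : CircMatching n) {a b : Fin n}
    (h : arcRegion M.chords b = arcRegion M.chords a) {p : Fin n × Fin n}
    (hp : p ∈ M.chords) : (b < p.1 ∧ p.1 ≤ a) ↔ (b < p.2 ∧ p.2 ≤ a) := by
  have h1 := side_iff_of_arcRegion_eq M.lt h hp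
  have h2 := M.lt p hp
  simp only [Fin.lt_def, Fin.le_def] at *
  omega

theorem exists_crossing_of_repeated_arcRegion {n : ℕ} (M : CircMatching n)
    (hcore : IsCoreMatching M) {a b : Fin n} (hba : b < a)
    (h : arcRegion M.chords b = arcRegion M.chords a) :
    ∃ q ∈ M.chords, ∃ p ∈ M.chords, Interleaves q p ∧ p.2 = a ∧ b < q.1 := by
  obtain ⟨p, ⟨hp, hpa⟩, -⟩ := M.mem_unique a
  obtain ⟨q, hq, hpq⟩ := hcore p hp
  have h1 := mem_block_iff_of_arcRegion_eq M h hp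
  have h2 := mem_block_iff_of_arcRegion_eq M h hq
  have h3 := M.lt p hp
  have h4 := M.lt q hq
  refine ⟨q, hq, p, hp, ?_⟩
  simp only [CrossRel, Interleaves, Fin.lt_def, Fin.le_def, Fin.ext_iff] at *
  omega

/-- The arcs whose region already contains an earlier arc. -/
noncomputable def repeatedArcs {n : ℕ} (D : Finset (Fin n × Fin n)) : Finset (Fin n) :=
  open Classical in Finset.univ.filter fun a => ∃ b < a, arcRegion D b = arcRegion D a

theorem card_repeatedArcs_lt_crossNum {n : ℕ} (M : CircMatching n)
    (hcore : IsCoreMatching M) (hn : 0 < n) :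
    (repeatedArcs M.chords).card < crossNum M.chords := by
  classical
  let X := (M.chords ×ˢ M.chords).filter fun pq => Interleaves pq.1 pq.2
  let Y := X.filter fun pq => (⟨0, hn⟩ : Fin n) < pq.1.1
  have hsub : repeatedArcs M.chords ⊆ Y.image fun pq => pq.2.2 := by
    intro a ha
    obtain ⟨b, hba, hb⟩ := (Finset.mem_filter.mp ha).2
    obtain ⟨q, hq, p, hp, hqp, hpa, hbq⟩ :=
      exists_crossing_of_repeated_arcRegion M hcore hba hb
    refine Finset.mem_image.mpr ⟨(q, p), ?_, hpa⟩
    simp only [Y, X, Finset.mem_filter, Finset.mem_product]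
    exact ⟨⟨⟨hq, hp⟩, hqp⟩, Fin.lt_def.mpr ((Nat.zero_le _).trans_lt (Fin.lt_def.mp hbq))⟩
  have hlt : Y.card < X.card := by
    apply Finset.card_lt_card
    refine Finset.filter_ssubset.mpr ?_
    obtain ⟨p, ⟨hp, hp0⟩, -⟩ := M.mem_unique ⟨0, hn⟩
    obtain ⟨q, hq, hpq⟩ := hcore p hp
    have h3 := M.lt p hp
    refine ⟨(p, q), Finset.mem_filter.mpr ⟨Finset.mem_product.mpr ⟨hp, hq⟩, ?_⟩, ?_⟩ <;>
    · simp only [CrossRel, Interleaves, Fin.lt_def, Fin.ext_iff] at *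
      omega
  exact ((Finset.card_le_card hsub).trans Finset.card_image_le).trans_lt hlt

theorem card_points_le_four_mul_crossNum {n : ℕ} (M : CircMatching n)
    (hcore : IsCoreMatching M) : n ≤ 4 * crossNum M.chords := by
  classical
  let X := (M.chords ×ˢ M.chords).filter fun pq => Interleaves pq.1 pq.2
  have h1 : M.chords ⊆ X.image Prod.fst ∪ X.image Prod.snd := by
    intro p hp
    obtain ⟨q, hq, h | h⟩ := hcore p hp
    · exact Finset.mem_union_left _ (Finset.mem_image.mpr ⟨(p, q), Finset.mem_filter.mpr
        ⟨Finset.mem_product.mpr ⟨hp, hq⟩, h⟩, rfl⟩)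
    · exact Finset.mem_union_right _ (Finset.mem_image.mpr ⟨(q, p), Finset.mem_filter.mpr
        ⟨Finset.mem_product.mpr ⟨hq, hp⟩, h⟩, rfl⟩)
  have h2 : (Finset.univ : Finset (Fin n)) ⊆
      M.chords.image Prod.fst ∪ M.chords.image Prod.snd := by
    intro v _
    obtain ⟨p, ⟨hp, h | h⟩, -⟩ := M.mem_unique v
    · exact Finset.mem_union_left _ (Finset.mem_image.mpr ⟨p, hp, h⟩)
    · exact Finset.mem_union_right _ (Finset.mem_image.mpr ⟨p, hp, h⟩)
  have h3 := (Finset.card_le_card h1).trans (Finset.card_union_le _ _)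
  have h4 := (Finset.card_le_card h2).trans (Finset.card_union_le _ _)
  rw [Finset.card_univ, Fintype.card_fin] at h4
  have h5 := Finset.card_image_le (s := X) (f := Prod.fst)
  have h6 := Finset.card_image_le (s := X) (f := Prod.snd)
  have h7 := Finset.card_image_le (s := M.chords) (f := Prod.fst)
  have h8 := Finset.card_image_le (s := M.chords) (f := Prod.snd)
  have h9 : X.card = crossNum M.chords := rfl
  omega

/-- Each arc of a region owns four points: the endpoints of the chord at its initial point and
of a chord crossing it. -/
theorem four_mul_card_le_of_arcRegion_eq {n : ℕ} (M : CircMatching n)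
    (hcore : IsCoreMatching M) (S : Finset (Fin n))
    (hS : ∀ a ∈ S, ∀ b ∈ S, arcRegion M.chords a = arcRegion M.chords b) :
    4 * S.card ≤ n := by
  classical
  have hB : ∀ a : Fin n, ∃ B : Finset (Fin n), B.card = 4 ∧
      ∀ b, arcRegion M.chords b = arcRegion M.chords a →
        (b < a → ∀ x ∈ B, b < x ∧ x ≤ a) ∧ (a < b → ∀ x ∈ B, ¬ (a < x ∧ x ≤ b)) := by
    intro a
    obtain ⟨p, ⟨hp, hpa⟩, -⟩ := M.mem_unique a
    obtain ⟨q, hq, hpq⟩ := hcore p hp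
    have h3 := M.lt p hp
    have h4 := M.lt q hq
    refine ⟨{p.1, p.2, q.1, q.2}, ?_, fun b hb => ?_⟩
    · have hne : p.1 ≠ p.2 ∧ p.1 ≠ q.1 ∧ p.1 ≠ q.2 ∧ p.2 ≠ q.1 ∧ p.2 ≠ q.2 ∧ q.1 ≠ q.2 := by
        simp only [CrossRel, Interleaves, Fin.lt_def, ne_eq, Fin.ext_iff] at *
        omega
      obtain ⟨e1, e2, e3, e4, e5, e6⟩ := hne
      rw [Finset.card_insert_of_notMem (by simp [e1, e2, e3]),
        Finset.card_insert_of_notMem (by simp [e4, e5]), Finset.card_pair e6]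
    · have h1 := mem_block_iff_of_arcRegion_eq M hb hp
      have h2 := mem_block_iff_of_arcRegion_eq M hb hq
      have h5 := mem_block_iff_of_arcRegion_eq M hb.symm hp
      have h6 := mem_block_iff_of_arcRegion_eq M hb.symm hq
      simp only [Finset.mem_insert, Finset.mem_singleton, forall_eq_or_imp, forall_eq]
      simp only [CrossRel, Interleaves, Fin.lt_def, Fin.le_def, Fin.ext_iff] at *
      omega
  choose B hBcard hBblock using hB
  have hlt : ∀ a ∈ S, ∀ b ∈ S, a < b → Disjoint (B a) (B b) := by
    intro a ha b hb hab
    rw [Finset.disjoint_left]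
    intro x hxa hxb
    exact (hBblock a b (hS b hb a ha)).2 hab x hxa ((hBblock b a (hS a ha b hb)).1 hab x hxb)
  have hdisj : (S : Set (Fin n)).PairwiseDisjoint B := by
    intro a ha b hb hne
    rcases lt_or_gt_of_ne hne with h | h
    · exact hlt a ha b hb h
    · exact (hlt b hb a ha h).symm
  have hcard := Finset.card_le_univ (S.biUnion B)
  rw [Finset.card_biUnion hdisj, Finset.sum_congr rfl fun a _ => hBcard a, Finset.sum_const,
    smul_eq_mul, Fintype.card_fin] at hcard
  omega

theorem card_le_card_image_add_repeatedArcs {n : ℕ} (D : Finset (Fin n × Fin n))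
    [DecidableEq (Set ℂ)] :
    n ≤ ((Finset.univ : Finset (Fin n)).image (arcRegion D)).card + (repeatedArcs D).card := by
  have h1 : (repeatedArcs D)ᶜ.card ≤
      ((Finset.univ : Finset (Fin n)).image (arcRegion D)).card := by
    refine Finset.card_le_card_of_injOn (arcRegion D)
      (fun a _ => Finset.mem_coe.mpr (Finset.mem_image_of_mem _ (Finset.mem_univ a))) ?_
    intro a ha b hb h
    simp only [repeatedArcs, Finset.coe_compl, Finset.coe_filter, Finset.mem_univ, true_and,
      Set.mem_compl_iff, Set.mem_ofPred_eq, not_exists, not_and] at ha hb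
    rcases lt_trichotomy a b with hab | hab | hab
    · exact absurd h (hb a hab)
    · exact hab
    · exact absurd h.symm (ha b hab)
  have h2 := Finset.card_add_card_compl (repeatedArcs D)
  rw [Fintype.card_fin] at h2
  omega

theorem sum_mul_card_filter_eq {T : Type*} (P : Finset T) (s : T → ℕ) (n : ℕ)
    (hs : ∀ C ∈ P, s C ≤ n) :
    ∑ i ∈ Finset.Icc 2 n, (2 * i - 3) * (P.filter fun C => s C = i).card
      = ∑ C ∈ P.filter (fun C => 2 ≤ s C), (2 * s C - 3) := by
  rw [← Finset.sum_fiberwise_of_maps_to (g := s) (t := Finset.Icc 2 n)]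
  · refine Finset.sum_congr rfl fun i hi => ?_
    have hi2 := (Finset.mem_Icc.mp hi).1
    have : ((P.filter fun C => 2 ≤ s C).filter fun C => s C = i) = P.filter fun C => s C = i := by
      ext C
      simp only [Finset.mem_filter]
      constructor
      · rintro ⟨⟨h1, -⟩, h3⟩
        exact ⟨h1, h3⟩
      · rintro ⟨h1, h3⟩
        exact ⟨⟨h1, h3 ▸ hi2⟩, h3⟩
    rw [this, Finset.sum_congr rfl fun C hC => by rw [(Finset.mem_filter.mp hC).2],
      Finset.sum_const, smul_eq_mul, mul_comm]
  · intro C hC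
    obtain ⟨h1, h2⟩ := Finset.mem_filter.mp hC
    exact Finset.mem_Icc.mpr ⟨h2, hs C h1⟩

theorem sum_potential_add_card {T : Type*} (P : Finset T) (s : T → ℕ)
    (hs : ∀ C ∈ P, 1 ≤ s C) :
    ∑ C ∈ P.filter (fun C => 2 ≤ s C), (2 * s C - 3) + (P.filter fun C => 2 ≤ s C).card
      + 2 * P.card = 2 * ∑ C ∈ P, s C := by
  rw [Finset.sum_filter, Finset.card_filter, Finset.card_eq_sum_ones, Finset.mul_sum,
    Finset.mul_sum, ← Finset.sum_add_distrib, ← Finset.sum_add_distrib]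
  refine Finset.sum_congr rfl fun C hC => ?_
  have := hs C hC
  split_ifs <;> omega

/-- For any core matching `K` with `k = k(K) ≥ 2` crossings, the potential
`Φ(K) = Σ_{i>1} (2i−3)·nᵢ(K)` satisfies `Φ(K) ≤ 2k − 3`, with equality if and
only if `n₁(K) = 3k`, `n_k(K) = 1`, and `nᵢ(K) = 0` for all `i ∉ {1, k}`
(`i` ranging over the positive integers; a region of a matching has at most `n`
boundary arcs, so the sum over `1 < i ≤ n` is the full potential). -/
theorem coreMatching_potential_le {n k : ℕ} (M : CircMatching n)
    (hcore : IsCoreMatching M) (hk : crossNum M.chords = k) (hk2 : 2 ≤ k) :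
    (∑ i ∈ Finset.Icc 2 n, (2 * i - 3) * nReg M.chords i) ≤ 2 * k - 3 ∧
    ((∑ i ∈ Finset.Icc 2 n, (2 * i - 3) * nReg M.chords i) = 2 * k - 3 ↔
      (nReg M.chords 1 = 3 * k ∧ nReg M.chords k = 1 ∧
        ∀ i : ℕ, 1 ≤ i → i ≠ 1 → i ≠ k → nReg M.chords i = 0)) := by
  classical
  have hn : 2 ≤ n := by
    by_contra hlt
    have : crossNum M.chords = 0 := by
      refine Finset.card_eq_zero.mpr (Finset.filter_eq_empty_iff.mpr ?_)
      intro pq _ h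
      have := pq.2.2.isLt
      simp only [Interleaves, Fin.lt_def] at h
      omega
    omega
  obtain ⟨P, hP⟩ : ∃ P, P = (Finset.univ : Finset (Fin n)).image (arcRegion M.chords) := ⟨_, rfl⟩
  obtain ⟨s, hs⟩ : ∃ s : Set ℂ → ℕ, s = fun C =>
    (Finset.univ.filter fun j => arcRegion M.chords j = C).card := ⟨_, rfl⟩
  have hN : ∀ i, 1 ≤ i → nReg M.chords i = (P.filter fun C => s C = i).card := by
    intro i hi
    rw [nReg_eq_card M hn hi, hP, hs]
  have hs1 : ∀ C ∈ P, 1 ≤ s C := by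
    intro C hC
    rw [hP] at hC
    obtain ⟨j, -, hj⟩ := Finset.mem_image.mp hC
    rw [hs]
    exact Finset.card_pos.mpr ⟨j, Finset.mem_filter.mpr ⟨Finset.mem_univ j, hj⟩⟩
  have hsn : ∀ C ∈ P, s C ≤ n := by
    intro C _
    rw [hs]
    exact (Finset.card_le_univ _).trans_eq (Fintype.card_fin n)
  have hsum : ∑ C ∈ P, s C = n := by
    rw [hP, hs]
    have := Finset.card_eq_sum_card_image (arcRegion M.chords) (Finset.univ : Finset (Fin n))
    rw [Finset.card_univ, Fintype.card_fin] at this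
    exact this.symm
  have hpot := sum_potential_add_card P s hs1
  have hΦ : ∑ i ∈ Finset.Icc 2 n, (2 * i - 3) * nReg M.chords i
      = ∑ C ∈ P.filter (fun C => 2 ≤ s C), (2 * s C - 3) := by
    rw [← sum_mul_card_filter_eq P s n hsn]
    refine Finset.sum_congr rfl fun i hi => ?_
    rw [hN i (by have := (Finset.mem_Icc.mp hi).1; omega)]
  have hrep := card_repeatedArcs_lt_crossNum M hcore (by omega)
  have himg := card_le_card_image_add_repeatedArcs M.chords
  rw [← hP] at himg
  have hzero : (P.filter fun C => 2 ≤ s C).card = 0 →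
      ∑ C ∈ P.filter (fun C => 2 ≤ s C), (2 * s C - 3) = 0 := by
    intro h
    rw [Finset.card_eq_zero.mp h, Finset.sum_empty]
  rw [hsum] at hpot
  refine ⟨by rw [hΦ]; omega, fun heq => ?_, ?_⟩
  · rw [hΦ] at heq
    have hR : (P.filter fun C => 2 ≤ s C).card = 1 := by omega
    obtain ⟨C₀, hC₀⟩ := Finset.card_eq_one.mp hR
    have hmem : C₀ ∈ P.filter fun C => 2 ≤ s C := by
      rw [hC₀]; exact Finset.mem_singleton_self _
    have hmem' := Finset.mem_filter.mp hmem
    have huniq : ∀ C ∈ P, 2 ≤ s C → C = C₀ := by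
      intro C hC h2
      have : C ∈ P.filter fun C => 2 ≤ s C := Finset.mem_filter.mpr ⟨hC, h2⟩
      rw [hC₀] at this
      exact Finset.mem_singleton.mp this
    have hsk : s C₀ = k := by
      rw [hC₀, Finset.sum_singleton] at heq
      omega
    have hfour : 4 * s C₀ ≤ n := by
      rw [hs]
      refine four_mul_card_le_of_arcRegion_eq M hcore _ fun a ha b hb => ?_
      exact (Finset.mem_filter.mp ha).2.trans (Finset.mem_filter.mp hb).2.symm
    have hle := card_points_le_four_mul_crossNum M hcore
    have hsplit := Finset.card_filter_add_card_filter_not (s := P) (fun C => 2 ≤ s C)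
    have hone : (P.filter fun C => ¬ 2 ≤ s C) = P.filter fun C => s C = 1 := by
      refine Finset.filter_congr fun C hC => ?_
      have := hs1 C hC
      omega
    rw [hone] at hsplit
    refine ⟨by rw [hN 1 le_rfl]; omega, ?_, fun i hi hi1 hik => ?_⟩
    · rw [hN k (by omega), Finset.card_eq_one]
      refine ⟨C₀, ?_⟩
      ext C
      rw [Finset.mem_filter, Finset.mem_singleton]
      constructor
      · rintro ⟨hC, h⟩
        exact huniq C hC (by omega)
      · rintro rfl
        exact ⟨hmem'.1, hsk⟩
    · rw [hN i hi, Finset.card_eq_zero, Finset.filter_eq_empty_iff]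
      intro C hC h
      have := huniq C hC (by omega)
      subst this
      omega
  · rintro ⟨-, hk1, hother⟩
    have hkn : k ≤ n := by
      rw [hN k (by omega)] at hk1
      obtain ⟨C, hC⟩ := Finset.card_pos.mp (by rw [hk1]; exact one_pos)
      obtain ⟨hCP, hCk⟩ := Finset.mem_filter.mp hC
      exact hCk ▸ hsn C hCP
    rw [Finset.sum_eq_single_of_mem k (Finset.mem_Icc.mpr ⟨hk2, hkn⟩), hk1, mul_one]
    intro i hi hik
    have := (Finset.mem_Icc.mp hi).1
    rw [hother i (by omega) (by omega) hik, mul_zero]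
end

section
/- Touchard–Riordan formula: for every m ≥ 0, the polynomial Σ_M z^{cr(M)}, summed over all perfect matchings M of 2m points on a circle where cr(M) is the number of crossings of M, equals (1/(1−z)^m) · Σ_{k=−m}^{m} (−1)^k binom(2m, m+k) z^{binom(k,2)}. -/
noncomputable instance (n : ℕ) : Fintype (CircMatching n) :=
  Fintype.ofInjective CircMatching.chords (fun a b h => by cases a; cases b; simpa using h)

open Polynomial

/-- The coefficient of `x ^ h` in the Laurent polynomial `(x + x⁻¹) ^ n`. -/
def centralCoeff : ℕ → ℤ → ℤ
  | 0, h => if h = 0 then 1 else 0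
  | n + 1, h => centralCoeff n (h - 1) + centralCoeff n (h + 1)

lemma centralCoeff_neg (n : ℕ) (h : ℤ) : centralCoeff n (-h) = centralCoeff n h := by
  induction n generalizing h with
  | zero => simp [centralCoeff]
  | succ n ih =>
    simp only [centralCoeff]
    rw [← ih (h - 1), ← ih (h + 1), add_comm]
    ring_nf

lemma centralCoeff_eq_zero (n : ℕ) (h : ℤ) (hn : (n : ℤ) < h) : centralCoeff n h = 0 := by
  induction n generalizing h with
  | zero =>
    have : h ≠ 0 := by rintro rfl; simp at hn
    simp [centralCoeff, this]
  | succ n ih =>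
    push_cast at hn
    simp [centralCoeff, ih (h - 1) (by linarith), ih (h + 1) (by linarith)]

lemma centralCoeff_eq_choose (n j : ℕ) : centralCoeff n (2 * j - n) = n.choose j := by
  induction n generalizing j with
  | zero => cases j <;> simp [centralCoeff]; omega
  | succ n ih =>
    cases j with
    | zero =>
      have h1 := ih 0
      have h2 : centralCoeff n (-((n : ℤ) + 2)) = 0 := by
        rw [centralCoeff_neg]; exact centralCoeff_eq_zero _ _ (by linarith)
      simp only [centralCoeff]
      simp only [Nat.cast_zero, Nat.cast_add, Nat.cast_one] at h1 ⊢
      rw [show (2 * 0 - ((n : ℤ) + 1) - 1) = -(n + 2) by ring, h2,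
        show (2 * 0 - ((n : ℤ) + 1) + 1) = 2 * 0 - n by ring, h1]
      simp
    | succ j =>
      have h1 := ih j
      have h2 := ih (j + 1)
      simp only [centralCoeff, Nat.choose_succ_succ]
      push_cast at h1 h2 ⊢
      rw [← h1, ← h2]
      ring_nf

/-- The ballot number counting paths with steps `±1` that stay nonnegative and lead from height
`0` to height `h` in `n` steps (for `-1 ≤ h`). -/
def ballotCoeff (n : ℕ) (h : ℤ) : ℤ := centralCoeff n h - centralCoeff n (h + 2)

lemma ballotCoeff_succ (n : ℕ) (h : ℤ) :
    ballotCoeff (n + 1) h = ballotCoeff n (h - 1) + ballotCoeff n (h + 1) := by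
  simp only [ballotCoeff, centralCoeff]
  ring_nf

lemma ballotCoeff_neg_one (n : ℕ) : ballotCoeff n (-1) = 0 := by
  have := centralCoeff_neg n 1
  simp [ballotCoeff, this]

lemma ballotCoeff_eq_zero (n : ℕ) (h : ℤ) (hn : (n : ℤ) < h) : ballotCoeff n h = 0 := by
  simp [ballotCoeff, centralCoeff_eq_zero n h hn, centralCoeff_eq_zero n (h + 2) (by linarith)]

section Gauss

variable {R : Type*} [CommRing R] (q : R)

/-- `gaussBinom q h k` is the Gaussian binomial coefficient `[h + k choose k]` at `q`. -/
def gaussBinom : ℕ → ℕ → R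
  | 0, _ => 1
  | _ + 1, 0 => 1
  | h + 1, k + 1 => q ^ (k + 1) * gaussBinom h (k + 1) + gaussBinom (h + 1) k

lemma gaussBinom_zero_right (h : ℕ) : gaussBinom q h 0 = 1 := by
  cases h <;> simp [gaussBinom]

lemma gaussBinom_succ_succ (h k : ℕ) : gaussBinom q (h + 1) (k + 1) =
    q ^ (k + 1) * gaussBinom q h (k + 1) + gaussBinom q (h + 1) k := by
  rw [gaussBinom]

lemma gaussBinom_exchange (h k : ℕ) :
    (1 - q ^ (h + 1)) * gaussBinom q (h + 1) k = (1 - q ^ (k + 1)) * gaussBinom q h (k + 1) ∧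
    (1 - q ^ (h + 1)) * gaussBinom q (h + 1) k = (1 - q ^ (h + k + 1)) * gaussBinom q h k := by
  induction h generalizing k with
  | zero =>
    induction k with
    | zero => simp [gaussBinom]
    | succ k ih =>
      obtain ⟨ih, -⟩ := ih
      simp only [gaussBinom] at ih ⊢
      constructor <;> linear_combination ih
  | succ h ihh =>
    induction k with
    | zero =>
      have h1 := (ihh 0).1
      simp only [gaussBinom, gaussBinom_zero_right] at h1 ⊢
      constructor
      · linear_combination q * h1
      · simp
    | succ k ihk =>
      have h1 := ihk.1
      have h2 := (ihh (k + 1)).1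
      rw [gaussBinom_succ_succ q (h + 1) k, gaussBinom_succ_succ q h (k + 1)]
      constructor
      · linear_combination h1 + q ^ (k + 2) * h2
      · linear_combination h1

/-- The connection coefficients between continuous `q`-Hermite and Chebyshev polynomials. -/
def hermiteCoeff (h k : ℕ) : R := (-1) ^ k * q ^ ((k + 1).choose 2) * gaussBinom q h k

lemma hermiteCoeff_zero_right (h : ℕ) : hermiteCoeff q h 0 = 1 := by
  simp [hermiteCoeff, gaussBinom_zero_right]

lemma hermiteCoeff_succ (h k : ℕ) :
    hermiteCoeff q (h + 1) (k + 1) + hermiteCoeff q (h + 1) k =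
      hermiteCoeff q h (k + 1) + (1 - q ^ (h + 2)) * hermiteCoeff q (h + 2) k := by
  have h1 := (gaussBinom_exchange q (h + 1) k).1
  have e := gaussBinom_succ_succ q h k
  have hc : (k + 1 + 1).choose 2 = (k + 1) + (k + 1).choose 2 := by
    rw [Nat.choose_succ_succ, Nat.choose_one_right]
  simp only [hermiteCoeff, hc, pow_add, pow_one] at h1 e ⊢
  linear_combination (-1) ^ k * q ^ ((k + 1).choose 2) * (-h1 - e)

lemma hermiteCoeff_zero_succ (k : ℕ) :
    hermiteCoeff q 0 (k + 1) + hermiteCoeff q 0 k = (1 - q) * hermiteCoeff q 1 k := by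
  have h1 := (gaussBinom_exchange q 0 k).1
  have hc : (k + 1 + 1).choose 2 = (k + 1) + (k + 1).choose 2 := by
    rw [Nat.choose_succ_succ, Nat.choose_one_right]
  simp only [hermiteCoeff, hc, pow_add, pow_one, gaussBinom, zero_add] at h1 ⊢
  linear_combination -(-1) ^ k * q ^ ((k + 1).choose 2) * h1

/-- The closed form of the normalized weighted count of partial matchings of `n` points with `h`
open points. -/
def hermiteMoment (n h : ℕ) : R :=
  ∑ k ∈ Finset.range (n + 1), hermiteCoeff q h k * ballotCoeff n (h + 2 * k)

lemma hermiteMoment_eq_sum_range {n h N : ℕ} (hN : n < h + 2 * N) :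
    hermiteMoment q n h =
      ∑ k ∈ Finset.range N, hermiteCoeff q h k * ballotCoeff n (h + 2 * k) := by
  have key : ∀ a b : ℕ, a ≤ b → n < h + 2 * a →
      ∑ k ∈ Finset.range a, hermiteCoeff q h k * (ballotCoeff n (h + 2 * k) : R) =
        ∑ k ∈ Finset.range b, hermiteCoeff q h k * (ballotCoeff n (h + 2 * k) : R) := by
    intro a b hab ha
    refine Finset.sum_subset (by simpa using hab) fun k _ hk => ?_
    rw [ballotCoeff_eq_zero _ _ (by simp at hk; omega)]
    simp
  rcases le_total (n + 1) N with hle | hle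
  · exact key _ _ hle (by omega)
  · exact (key _ _ hle hN).symm

lemma hermiteMoment_eq_zero {n h : ℕ} (hn : n < h) : hermiteMoment q n h = 0 := by
  rw [hermiteMoment_eq_sum_range q (N := 0) (by omega)]
  simp

lemma hermiteMoment_zero_zero : hermiteMoment q 0 0 = 1 := by
  simp [hermiteMoment, hermiteCoeff_zero_right, ballotCoeff, centralCoeff]

lemma hermiteMoment_succ_zero (n : ℕ) :
    hermiteMoment q (n + 1) 0 = (1 - q) * hermiteMoment q n 1 := by
  rw [hermiteMoment_eq_sum_range q (N := n + 2) (by omega),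
    hermiteMoment_eq_sum_range q (n := n) (N := n + 1) (by omega)]
  have e : ∀ k : ℕ, hermiteCoeff q 0 k * (ballotCoeff (n + 1) ((0 : ℕ) + 2 * k) : R) =
      hermiteCoeff q 0 k * (ballotCoeff n (2 * k - 1) : R) +
        hermiteCoeff q 0 k * (ballotCoeff n (2 * k + 1) : R) := by
    intro k
    rw [ballotCoeff_succ]; push_cast; ring_nf
  simp only [e, Finset.sum_add_distrib]
  rw [Finset.sum_range_succ', Finset.sum_range_succ _ (n + 1),
    ballotCoeff_eq_zero n (2 * (n + 1 : ℕ) + 1) (by push_cast; omega)]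
  simp only [Nat.cast_zero, mul_zero, zero_sub, ballotCoeff_neg_one, Int.cast_zero, add_zero]
  rw [← Finset.sum_add_distrib, Finset.mul_sum]
  refine Finset.sum_congr rfl fun k _ => ?_
  have a : (2 * ((k + 1 : ℕ) : ℤ) - 1) = 2 * k + 1 := by push_cast; ring
  have b : (((1 : ℕ) : ℤ) + 2 * k) = 2 * k + 1 := by push_cast; ring
  rw [a, b, ← add_mul, hermiteCoeff_zero_succ, mul_assoc]

lemma hermiteMoment_succ_succ (n h : ℕ) :
    hermiteMoment q (n + 1) (h + 1) =
      hermiteMoment q n h + (1 - q ^ (h + 2)) * hermiteMoment q n (h + 2) := by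
  rw [hermiteMoment_eq_sum_range q (N := n + 2) (by omega),
    hermiteMoment_eq_sum_range q (n := n) (h := h) (N := n + 2) (by omega),
    hermiteMoment_eq_sum_range q (n := n) (h := h + 2) (N := n + 1) (by omega)]
  have e : ∀ k : ℕ, hermiteCoeff q (h + 1) k *
        (ballotCoeff (n + 1) ((h + 1 : ℕ) + 2 * k) : R) =
      hermiteCoeff q (h + 1) k * (ballotCoeff n (h + 2 * k) : R) +
        hermiteCoeff q (h + 1) k * (ballotCoeff n (h + 2 * k + 2) : R) := by
    intro k
    rw [ballotCoeff_succ]; push_cast; ring_nf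
  simp only [e, Finset.sum_add_distrib]
  rw [Finset.sum_range_succ', Finset.sum_range_succ _ (n + 1),
    ballotCoeff_eq_zero n (h + 2 * (n + 1 : ℕ) + 2) (by push_cast; omega),
    Finset.sum_range_succ' _ (n + 1), hermiteCoeff_zero_right, hermiteCoeff_zero_right,
    Finset.mul_sum]
  have key : ∀ k : ℕ,
      hermiteCoeff q (h + 1) (k + 1) * (ballotCoeff n (h + 2 * (k + 1 : ℕ)) : R) +
        hermiteCoeff q (h + 1) k * (ballotCoeff n (h + 2 * k + 2) : R) =
      hermiteCoeff q h (k + 1) * (ballotCoeff n (h + 2 * (k + 1 : ℕ)) : R) +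
        (1 - q ^ (h + 2)) *
          (hermiteCoeff q (h + 2) k * (ballotCoeff n ((h + 2 : ℕ) + 2 * k) : R)) := by
    intro k
    have a : ((h : ℤ) + 2 * (k + 1 : ℕ)) = h + 2 * k + 2 := by push_cast; ring
    have b : (((h + 2 : ℕ) : ℤ) + 2 * k) = h + 2 * k + 2 := by push_cast; ring
    rw [a, b, ← add_mul, hermiteCoeff_succ]
    ring
  have := Finset.sum_congr (rfl : Finset.range (n + 1) = Finset.range (n + 1)) fun k _ => key k
  simp only [Finset.sum_add_distrib] at this
  simp only [Int.cast_zero, mul_zero, add_zero]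
  linear_combination this

lemma hermiteMoment_two_mul_zero (m : ℕ) :
    hermiteMoment q (2 * m) 0 =
      ∑ j ∈ Finset.range (2 * m + 1), ((-1) ^ (j + m) * ((2 * m).choose j : R)) *
        q ^ ((((j : ℤ) - m) * ((j : ℤ) - m - 1) / 2).toNat) := by
  have hexp : ∀ l : ℕ, (((l : ℤ) + 1) * l / 2).toNat = (l + 1).choose 2 := by
    intro l
    rw [Nat.choose_two_right, Nat.add_sub_cancel]
    norm_cast
  have hch : ∀ j : ℕ, ((2 * m).choose j : R) = (centralCoeff (2 * m) (2 * (j - m)) : R) := by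
    intro j
    have := centralCoeff_eq_choose (2 * m) j
    rw [show (2 * (j : ℤ) - (2 * m : ℕ)) = 2 * (j - m) by push_cast; ring] at this
    rw [this]; simp
  rw [hermiteMoment_eq_sum_range q (N := m + 1) (by omega),
    show Finset.range (2 * m + 1) = Finset.range (m + (m + 1)) by congr 1; ring,
    Finset.sum_range_add _ m (m + 1),
    ← Finset.sum_range_reflect _ m]
  simp only [hch, ballotCoeff]
  have hneg : ∀ l ∈ Finset.range m,
      ((-1 : R) ^ (m - 1 - l + m) *
        (centralCoeff (2 * m) (2 * (((m - 1 - l : ℕ) : ℤ) - m)) : R)) *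
        q ^ (((((m - 1 - l : ℕ) : ℤ) - m) * (((m - 1 - l : ℕ) : ℤ) - m - 1) / 2).toNat) =
      (-1) ^ (l + 1) * q ^ ((l + 2).choose 2) * centralCoeff (2 * m) (2 * (l + 1 : ℕ)) := by
    intro l hl
    rw [Finset.mem_range] at hl
    obtain ⟨d, rfl⟩ : ∃ d, m = d + l + 1 := ⟨m - l - 1, by omega⟩
    rw [show d + l + 1 - 1 - l = d by omega,
      show ((d : ℤ) - (d + l + 1 : ℕ)) = -((l + 1 : ℕ) : ℤ) by push_cast; ring,
      mul_neg, centralCoeff_neg, ← hexp]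
    rw [show d + (d + l + 1) = 2 * d + (l + 1) by ring, pow_add, pow_mul]
    have : (-((l + 1 : ℕ) : ℤ)) * (-((l + 1 : ℕ) : ℤ) - 1) =
      (((l + 1 : ℕ) : ℤ) + 1) * ((l + 1 : ℕ) : ℤ) := by ring
    rw [this]
    simp only [even_two, Even.neg_pow, one_pow, one_mul]
    ring
  have hpos : ∀ l ∈ Finset.range m,
      ((-1 : R) ^ (m + (l + 1) + m) *
        (centralCoeff (2 * m) (2 * (((m + (l + 1) : ℕ) : ℤ) - m)) : R)) *
        q ^ (((((m + (l + 1) : ℕ) : ℤ) - m) * (((m + (l + 1) : ℕ) : ℤ) - m - 1) / 2).toNat) =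
      - ((-1) ^ l * q ^ ((l + 1).choose 2) * centralCoeff (2 * m) (2 * (l + 1 : ℕ))) := by
    intro l _
    rw [show (((m + (l + 1) : ℕ) : ℤ) - m) = (l + 1 : ℕ) by push_cast; ring,
      show m + (l + 1) + m = 2 * m + (l + 1) by ring, pow_add, pow_mul, ← hexp]
    rw [show (((l + 1 : ℕ) : ℤ) * ((l + 1 : ℕ) - 1)) = ((l : ℤ) + 1) * l by push_cast; ring]
    simp only [even_two, Even.neg_pow, one_pow, one_mul]
    ring
  conv_rhs => rw [Finset.sum_congr rfl hneg, Finset.sum_range_succ', Finset.sum_congr rfl hpos]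
  have hcoeff : ∀ k, hermiteCoeff q 0 k = (-1) ^ k * q ^ ((k + 1).choose 2) := by
    intro k; simp [hermiteCoeff, gaussBinom]
  simp only [hcoeff, Int.cast_sub, mul_sub, Finset.sum_sub_distrib]
  rw [Finset.sum_range_succ' (n := m), Finset.sum_range_succ (n := m),
    centralCoeff_eq_zero (2 * m) ((0 : ℕ) + 2 * m + 2) (by push_cast; omega)]
  simp only [Finset.sum_neg_distrib, Nat.cast_zero, zero_add, Int.cast_zero, mul_zero, add_zero,
    sub_self, zero_mul, pow_zero, one_mul, ← two_mul, pow_mul, even_two, Even.neg_pow, one_pow]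
  have : ∀ l : ℕ, (2 * (l : ℤ) + 2) = 2 * (l + 1 : ℕ) := by intro l; push_cast; ring
  simp only [this]
  simp
  ring

end Gauss

/-- A partial matching of the points `0, …, n - 1`: a set `D` of disjoint chords with increasing
endpoints, together with the set `S` of the remaining (open) points. -/
structure IsPartialMatching (n : ℕ) (D : Finset (ℕ × ℕ)) (S : Finset ℕ) : Prop where
  fst_lt_snd : ∀ p ∈ D, p.1 < p.2
  snd_lt : ∀ p ∈ D, p.2 < n
  lt_of_mem : ∀ s ∈ S, s < n
  cover : ∀ v < n, v ∈ S ∨ ∃ p ∈ D, p.1 = v ∨ p.2 = v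
  fst_notMem : ∀ p ∈ D, p.1 ∉ S
  snd_notMem : ∀ p ∈ D, p.2 ∉ S
  eq_of_incident : ∀ p ∈ D, ∀ q ∈ D, ∀ v, (p.1 = v ∨ p.2 = v) → (q.1 = v ∨ q.2 = v) → p = q

/-- The number of crossings of a partial matching whose open points are regarded as the left
endpoints of chords that end to the right of all points. -/
def partialWeight (D : Finset (ℕ × ℕ)) (S : Finset ℕ) : ℕ :=
  (∑ p ∈ D, ∑ q ∈ D, if p.1 < q.1 ∧ q.1 < p.2 ∧ p.2 < q.2 then 1 else 0) +
    ∑ p ∈ D, ∑ s ∈ S, if p.1 < s ∧ s < p.2 then 1 else 0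

open Classical in
/-- The partial matchings of `n` points with `h` open points. -/
noncomputable def partialMatchings (n h : ℕ) : Finset (Finset (ℕ × ℕ) × Finset ℕ) :=
  ((Finset.range n ×ˢ Finset.range n).powerset ×ˢ (Finset.range n).powerset).filter
    fun c => IsPartialMatching n c.1 c.2 ∧ c.2.card = h

lemma mem_partialMatchings {n h : ℕ} {c : Finset (ℕ × ℕ) × Finset ℕ} :
    c ∈ partialMatchings n h ↔ IsPartialMatching n c.1 c.2 ∧ c.2.card = h := by
  classical
  rw [partialMatchings, Finset.mem_filter, and_iff_right_iff_imp]
  rintro ⟨hc, -⟩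
  rw [Finset.mem_product, Finset.mem_powerset, Finset.mem_powerset]
  constructor
  · intro p hp
    have h1 := hc.fst_lt_snd p hp
    have h2 := hc.snd_lt p hp
    rw [Finset.mem_product, Finset.mem_range, Finset.mem_range]
    exact ⟨h1.trans h2, h2⟩
  · intro s hs
    exact Finset.mem_range.2 (hc.lt_of_mem s hs)

namespace IsPartialMatching

variable {n : ℕ} {D : Finset (ℕ × ℕ)} {S : Finset ℕ}

lemma insert_open (hc : IsPartialMatching n D S) : IsPartialMatching (n + 1) D (insert n S) := by
  obtain ⟨h1, h2, h3, h4, h5, h6, h7⟩ := hc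
  refine ⟨h1, ?_, ?_, ?_, ?_, ?_, h7⟩
  case refine_3 =>
    intro v hv
    rcases Nat.lt_succ_iff_lt_or_eq.1 hv with h | rfl
    · exact (h4 v h).imp_left (Finset.mem_insert_of_mem)
    · exact Or.inl (Finset.mem_insert_self _ _)
  all_goals
    clear h4 h7
    grind

lemma erase_open (hc : IsPartialMatching (n + 1) D S) (hn : n ∈ S) :
    IsPartialMatching n D (S.erase n) := by
  obtain ⟨h1, h2, h3, h4, h5, h6, h7⟩ := hc
  refine ⟨h1, ?_, ?_, ?_, ?_, ?_, h7⟩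
  case refine_3 =>
    intro v hv
    exact (h4 v (by omega)).imp_left fun h => Finset.mem_erase.2 ⟨hv.ne, h⟩
  all_goals
    clear h4 h7
    grind

lemma insert_chord (hc : IsPartialMatching n D S) {s : ℕ} (hs : s ∈ S) :
    IsPartialMatching (n + 1) (insert (s, n) D) (S.erase s) := by
  obtain ⟨h1, h2, h3, h4, h5, h6, h7⟩ := hc
  constructor
  case eq_of_incident =>
    intro p hp q hq v hpv hqv
    rw [Finset.mem_insert] at hp hq
    rcases hp with rfl | hp <;> rcases hq with rfl | hq
    · rfl
    · have := h1 q hq; have := h2 q hq; have := h5 q hq; have := h6 q hq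
      clear h1 h2 h4 h5 h6 h7
      grind
    · have := h1 p hp; have := h2 p hp; have := h5 p hp; have := h6 p hp
      clear h1 h2 h4 h5 h6 h7
      grind
    · exact h7 p hp q hq v hpv hqv
  case cover =>
    intro v hv
    by_cases hvs : v = s
    · exact Or.inr ⟨_, Finset.mem_insert_self _ _, Or.inl hvs.symm⟩
    rcases Nat.lt_succ_iff_lt_or_eq.1 hv with h | rfl
    · rcases h4 v h with h | ⟨p, hp, h⟩
      · exact Or.inl (Finset.mem_erase.2 ⟨hvs, h⟩)
      · exact Or.inr ⟨p, Finset.mem_insert_of_mem hp, h⟩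
    · exact Or.inr ⟨_, Finset.mem_insert_self _ _, Or.inr rfl⟩
  all_goals
    clear h4 h7
    grind

lemma erase_chord (hc : IsPartialMatching (n + 1) D S) {s : ℕ} (hs : (s, n) ∈ D) :
    IsPartialMatching n (D.erase (s, n)) (insert s S) := by
  obtain ⟨h1, h2, h3, h4, h5, h6, h7⟩ := hc
  have key : ∀ p ∈ D.erase (s, n), p.1 ≠ s ∧ p.2 ≠ s ∧ p.1 ≠ n ∧ p.2 ≠ n := by
    intro p hp
    rw [Finset.mem_erase] at hp
    refine ⟨fun h => hp.1 ?_, fun h => hp.1 ?_, fun h => hp.1 ?_, fun h => hp.1 ?_⟩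
    · exact h7 p hp.2 _ hs s (Or.inl h) (Or.inl rfl)
    · exact h7 p hp.2 _ hs s (Or.inr h) (Or.inl rfl)
    · exact h7 p hp.2 _ hs n (Or.inl h) (Or.inr rfl)
    · exact h7 p hp.2 _ hs n (Or.inr h) (Or.inr rfl)
  constructor
  case cover =>
    intro v hv
    rcases h4 v (by omega) with h | ⟨p, hp, h⟩
    · exact Or.inl (Finset.mem_insert_of_mem h)
    · by_cases hps : p = (s, n)
      · subst hps
        rcases h with h | h
        · exact Or.inl (Finset.mem_insert.2 (Or.inl h.symm))
        · exact absurd h hv.ne'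
      · exact Or.inr ⟨p, Finset.mem_erase.2 ⟨hps, hp⟩, h⟩
  case lt_of_mem =>
    have h8 := h1 _ hs
    have h9 := h6 _ hs
    clear h4 h7
    grind
  case eq_of_incident =>
    exact fun p hp q hq => h7 p (Finset.mem_of_mem_erase hp) q (Finset.mem_of_mem_erase hq)
  all_goals
    clear h4 h7
    grind

lemma partialWeight_insert_open (hc : IsPartialMatching n D S) :
    partialWeight D (insert n S) = partialWeight D S := by
  have hn : n ∉ S := fun h => lt_irrefl _ (hc.lt_of_mem n h)
  unfold partialWeight
  congr 1
  refine Finset.sum_congr rfl fun p hp => ?_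
  rw [Finset.sum_insert hn, if_neg (by have := hc.snd_lt p hp; omega), zero_add]

lemma partialWeight_insert_chord (hc : IsPartialMatching n D S) {s : ℕ} (hs : s ∈ S) :
    partialWeight (insert (s, n) D) (S.erase s) =
      partialWeight D S + (S.filter (s < ·)).card := by
  have hD : (s, n) ∉ D := fun h => lt_irrefl _ (hc.snd_lt _ h)
  have e1 : ∑ q ∈ D, (if s < q.1 ∧ q.1 < n ∧ n < q.2 then 1 else 0) = 0 :=
    Finset.sum_eq_zero fun q hq => if_neg (by have := hc.snd_lt q hq; omega)
  have e2 : ∑ p ∈ D, (if p.1 < s ∧ s < p.2 ∧ p.2 < n then 1 else 0) =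
      ∑ p ∈ D, if p.1 < s ∧ s < p.2 then 1 else 0 :=
    Finset.sum_congr rfl fun p hp => by simp [hc.snd_lt p hp]
  have e3 : ∑ t ∈ S.erase s, (if s < t ∧ t < n then 1 else 0) = (S.filter (s < ·)).card := by
    rw [Finset.card_filter, ← Finset.add_sum_erase _ _ hs, if_neg (lt_irrefl s), zero_add]
    refine Finset.sum_congr rfl fun t ht => ?_
    simp [hc.lt_of_mem t (Finset.mem_of_mem_erase ht)]
  have e4 : ∀ p : ℕ × ℕ, ∑ t ∈ S, (if p.1 < t ∧ t < p.2 then 1 else 0) =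
      (if p.1 < s ∧ s < p.2 then 1 else 0) +
        ∑ t ∈ S.erase s, (if p.1 < t ∧ t < p.2 then 1 else 0) :=
    fun p => (Finset.add_sum_erase _ _ hs).symm
  simp only [partialWeight, Finset.sum_insert hD, Finset.sum_add_distrib, e1, e2, e3, e4]
  simp
  ring

end IsPartialMatching

section GeneratingFunction

variable {R : Type*} [CommRing R] (q : R)

lemma sum_pow_card_filter_lt (S : Finset ℕ) :
    ∑ s ∈ S, q ^ (S.filter (s < ·)).card = ∑ i ∈ Finset.range S.card, q ^ i := by
  induction S using Finset.induction_on_min with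
  | empty => simp
  | insert a S ha ih =>
    have haS : a ∉ S := fun h => lt_irrefl _ (ha a h)
    rw [Finset.sum_insert haS, Finset.card_insert_of_notMem haS, Finset.sum_range_succ, ← ih,
      add_comm]
    congr 1
    · refine Finset.sum_congr rfl fun s hs => ?_
      rw [Finset.filter_insert, if_neg (ha s hs).not_gt]
    · rw [Finset.filter_insert, if_neg (lt_irrefl a), Finset.filter_true_of_mem ha]

/-- The generating function of partial matchings of `n` points with `h` open points, by number of
crossings. -/
noncomputable def partialSum (n h : ℕ) : R :=
  ∑ c ∈ partialMatchings n h, q ^ partialWeight c.1 c.2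

lemma partialSum_eq_zero {n h : ℕ} (hn : n < h) : partialSum q n h = 0 := by
  refine Finset.sum_eq_zero fun c hc => ?_
  rw [mem_partialMatchings] at hc
  have : c.2 ⊆ Finset.range n := fun s hs => Finset.mem_range.2 (hc.1.lt_of_mem s hs)
  have := Finset.card_le_card this
  rw [Finset.card_range] at this
  omega

lemma partialSum_zero_zero : partialSum q 0 0 = 1 := by
  have : partialMatchings 0 0 = {(∅, ∅)} := by
    ext ⟨D, S⟩
    rw [mem_partialMatchings, Finset.mem_singleton, Prod.mk.injEq]
    constructor
    · rintro ⟨hc, hS⟩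
      refine ⟨Finset.eq_empty_of_forall_notMem fun p hp => ?_, Finset.card_eq_zero.1 hS⟩
      exact absurd (hc.snd_lt p hp) (by simp)
    · rintro ⟨rfl, rfl⟩
      exact ⟨by constructor <;> simp, rfl⟩
  simp [partialSum, this, partialWeight]

lemma sum_filter_last_open (n h : ℕ) :
    ∑ c ∈ (partialMatchings (n + 1) (h + 1)).filter (fun c => n ∈ c.2),
      q ^ partialWeight c.1 c.2 = partialSum q n h := by
  symm
  have hn : ∀ c ∈ partialMatchings n h, n ∉ c.2 := fun c hc hm =>
    lt_irrefl _ ((mem_partialMatchings.1 hc).1.lt_of_mem n hm)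
  refine Finset.sum_bij' (fun c _ => (c.1, insert n c.2)) (fun c _ => (c.1, c.2.erase n))
    ?_ ?_ ?_ ?_ ?_
  · intro c hc
    have hnc := hn c hc
    rw [mem_partialMatchings] at hc
    rw [Finset.mem_filter, mem_partialMatchings]
    exact ⟨⟨hc.1.insert_open, by rw [Finset.card_insert_of_notMem hnc, hc.2]⟩,
      Finset.mem_insert_self _ _⟩
  · intro c hc
    rw [Finset.mem_filter, mem_partialMatchings] at hc
    rw [mem_partialMatchings]
    exact ⟨hc.1.1.erase_open hc.2, by rw [Finset.card_erase_of_mem hc.2, hc.1.2]; rfl⟩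
  · intro c hc
    simp [Finset.erase_insert (hn c hc)]
  · intro c hc
    simp [Finset.insert_erase (Finset.mem_filter.1 hc).2]
  · intro c hc
    rw [(mem_partialMatchings.1 hc).1.partialWeight_insert_open]

lemma sum_filter_last_closed (n h : ℕ) :
    ∑ c ∈ (partialMatchings (n + 1) h).filter (fun c => n ∉ c.2), q ^ partialWeight c.1 c.2 =
      (∑ i ∈ Finset.range (h + 1), q ^ i) * partialSum q n (h + 1) := by
  have e : (∑ i ∈ Finset.range (h + 1), q ^ i) * partialSum q n (h + 1) =
      ∑ x ∈ (partialMatchings n (h + 1)).sigma fun c => c.2,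
        q ^ (partialWeight x.1.1 x.1.2 + (x.1.2.filter (x.2 < ·)).card) := by
    rw [Finset.sum_sigma, partialSum, Finset.mul_sum]
    refine Finset.sum_congr rfl fun c hc => ?_
    rw [← (mem_partialMatchings.1 hc).2, ← sum_pow_card_filter_lt, mul_comm, Finset.mul_sum]
    simp only [pow_add]
  rw [e]
  symm
  refine Finset.sum_bij (fun x _ => (insert (x.2, n) x.1.1, x.1.2.erase x.2)) ?_ ?_ ?_ ?_
  · rintro ⟨c, s⟩ hx
    rw [Finset.mem_sigma, mem_partialMatchings] at hx
    rw [Finset.mem_filter, mem_partialMatchings]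
    refine ⟨⟨hx.1.1.insert_chord hx.2, ?_⟩, fun h => ?_⟩
    · rw [Finset.card_erase_of_mem hx.2, hx.1.2]; rfl
    · exact lt_irrefl _ (hx.1.1.lt_of_mem n (Finset.mem_of_mem_erase h))
  · rintro ⟨⟨D, S⟩, s⟩ hx ⟨⟨D', S'⟩, s'⟩ hx' heq
    rw [Finset.mem_sigma, mem_partialMatchings] at hx hx'
    obtain ⟨⟨hc, -⟩, hs⟩ := hx
    obtain ⟨⟨hc', -⟩, hs'⟩ := hx'
    rw [Prod.mk.injEq] at heq
    obtain ⟨h1, h2⟩ := heq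
    dsimp only at hc hs hc' hs' h1 h2
    have hD : ∀ a, (a, n) ∉ D := fun a h => lt_irrefl _ (hc.snd_lt _ h)
    have hD' : ∀ a, (a, n) ∉ D' := fun a h => lt_irrefl _ (hc'.snd_lt _ h)
    have hss : s = s' := by
      have : (s, n) ∈ insert (s', n) D' := h1 ▸ Finset.mem_insert_self _ _
      rw [Finset.mem_insert] at this
      rcases this with h | h
      · exact congrArg Prod.fst h
      · exact absurd h (hD' s)
    subst hss
    have h3 : D = D' := by
      rw [← Finset.erase_insert (hD s), h1, Finset.erase_insert (hD' s)]
    have h4 : S = S' := by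
      rw [← Finset.insert_erase hs, h2, Finset.insert_erase hs']
    subst h3 h4
    rfl
  · rintro ⟨D, S⟩ hc
    rw [Finset.mem_filter, mem_partialMatchings] at hc
    obtain ⟨⟨hc, hcard⟩, hn⟩ := hc
    dsimp only at hc hcard hn
    obtain ⟨s, hs⟩ : ∃ s, (s, n) ∈ D := by
      rcases hc.cover n n.lt_succ_self with h | ⟨⟨a, b⟩, hp, h | h⟩
      · exact absurd h hn
      · have h1 := hc.fst_lt_snd _ hp
        have h2 := hc.snd_lt _ hp
        dsimp only at h h1 h2
        omega
      · dsimp only at h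
        exact ⟨a, h ▸ hp⟩
    have hsS : s ∉ S := hc.fst_notMem _ hs
    refine ⟨⟨(D.erase (s, n), insert s S), s⟩, ?_, ?_⟩
    · rw [Finset.mem_sigma, mem_partialMatchings]
      exact ⟨⟨hc.erase_chord hs, by rw [Finset.card_insert_of_notMem hsS, hcard]⟩,
        Finset.mem_insert_self _ _⟩
    · simp [Finset.insert_erase hs, Finset.erase_insert hsS]
  · rintro ⟨c, s⟩ hx
    rw [Finset.mem_sigma, mem_partialMatchings] at hx
    rw [hx.1.1.partialWeight_insert_chord hx.2]

lemma partialSum_succ_zero (n : ℕ) : partialSum q (n + 1) 0 = partialSum q n 1 := by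
  have h := sum_filter_last_closed q n 0
  rw [Finset.filter_true_of_mem] at h
  · simpa [partialSum] using h
  · intro c hc
    rw [mem_partialMatchings, Finset.card_eq_zero] at hc
    simp [hc.2]

lemma partialSum_succ_succ (n h : ℕ) :
    partialSum q (n + 1) (h + 1) =
      partialSum q n h + (∑ i ∈ Finset.range (h + 2), q ^ i) * partialSum q n (h + 2) := by
  rw [← sum_filter_last_open q n h, ← sum_filter_last_closed q n (h + 1), partialSum,
    Finset.sum_filter_add_sum_filter_not]

lemma one_sub_pow_mul_partialSum (h r : ℕ) :
    (1 - q) ^ r * partialSum q (h + 2 * r) h = hermiteMoment q (h + 2 * r) h := by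
  obtain ⟨n, hn⟩ : ∃ n, n = h + 2 * r := ⟨_, rfl⟩
  rw [← hn]
  induction n generalizing h r with
  | zero =>
    obtain ⟨rfl, rfl⟩ : h = 0 ∧ r = 0 := by omega
    simp [partialSum_zero_zero, hermiteMoment_zero_zero]
  | succ n ih =>
    cases h with
    | zero =>
      obtain ⟨r, rfl⟩ : ∃ r', r = r' + 1 := ⟨r - 1, by omega⟩
      rw [partialSum_succ_zero, hermiteMoment_succ_zero, ← ih 1 r (by omega)]
      ring
    | succ h =>
      rw [partialSum_succ_succ, hermiteMoment_succ_succ, ← ih h r (by omega)]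
      cases r with
      | zero =>
        have hlt : n < h + 2 := by omega
        rw [partialSum_eq_zero q hlt, hermiteMoment_eq_zero q hlt]
        ring
      | succ r =>
        rw [← ih (h + 2) r (by omega), ← mul_neg_geom_sum]
        ring

end GeneratingFunction

namespace CircMatching

variable {n : ℕ}

/-- The chords of a matching as pairs of natural numbers. -/
def natChords (D : Finset (Fin n × Fin n)) : Finset (ℕ × ℕ) :=
  D.map (Fin.valEmbedding.prodMap Fin.valEmbedding)

lemma isPartialMatching_natChords (M : CircMatching n) :
    IsPartialMatching n (natChords M.chords) ∅ := by
  constructor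
  case eq_of_incident =>
    simp only [natChords, Finset.mem_map]
    rintro _ ⟨p, hp, rfl⟩ _ ⟨p', hp', rfl⟩ v hv hv'
    have hvn : v < n := by
      rcases hv with rfl | rfl
      exacts [p.1.2, p.2.2]
    rw [(M.mem_unique ⟨v, hvn⟩).unique ⟨hp, by simpa [Fin.ext_iff] using hv⟩
      ⟨hp', by simpa [Fin.ext_iff] using hv'⟩]
  case cover =>
    intro v hv
    obtain ⟨p, ⟨hp, h⟩, -⟩ := M.mem_unique ⟨v, hv⟩
    exact Or.inr ⟨_, Finset.mem_map_of_mem _ hp, by simpa [Fin.ext_iff] using h⟩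
  case fst_lt_snd =>
    simp only [natChords, Finset.mem_map]
    rintro _ ⟨p, hp, rfl⟩
    exact M.lt p hp
  case snd_lt =>
    simp only [natChords, Finset.mem_map]
    rintro _ ⟨p, hp, rfl⟩
    exact p.2.2
  all_goals simp

lemma exists_natChords_eq {D : Finset (ℕ × ℕ)} (hD : IsPartialMatching n D ∅) :
    ∃ M : CircMatching n, natChords M.chords = D := by
  set E : Finset (Fin n × Fin n) :=
    Finset.univ.filter fun p => ((p.1 : ℕ), (p.2 : ℕ)) ∈ D with hE
  have hmem : ∀ p, p ∈ E ↔ ((p.1 : ℕ), (p.2 : ℕ)) ∈ D := by simp [hE]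
  refine ⟨⟨E, fun p hp => hD.fst_lt_snd _ ((hmem p).1 hp), fun v => ?_⟩, ?_⟩
  · rcases hD.cover v v.2 with h | ⟨⟨a, b⟩, hp, h⟩
    · simp at h
    · have hb : b < n := hD.snd_lt _ hp
      have hab : a < b := hD.fst_lt_snd _ hp
      refine ⟨(⟨a, hab.trans hb⟩, ⟨b, hb⟩), ⟨(hmem _).2 hp, by simpa [Fin.ext_iff] using h⟩, ?_⟩
      rintro p ⟨hpE, hpv⟩
      have := hD.eq_of_incident _ ((hmem p).1 hpE) _ hp v (by simpa [Fin.ext_iff] using hpv) h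
      rw [Prod.mk.injEq] at this
      exact Prod.ext (Fin.ext this.1) (Fin.ext this.2)
  · ext ⟨a, b⟩
    simp only [natChords, Finset.mem_map]
    constructor
    · rintro ⟨p, hp, h⟩
      rw [← h]
      exact (hmem p).1 hp
    · intro hp
      have hb : b < n := hD.snd_lt _ hp
      have hab : a < b := hD.fst_lt_snd _ hp
      exact ⟨(⟨a, hab.trans hb⟩, ⟨b, hb⟩), (hmem _).2 hp, rfl⟩

lemma partialWeight_natChords (D : Finset (Fin n × Fin n)) :
    partialWeight (natChords D) ∅ = crossNum D := by
  rw [crossNum, Finset.card_filter, Finset.sum_product]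
  simp only [partialWeight, natChords, Finset.sum_map, Finset.sum_empty, Finset.sum_const_zero,
    add_zero]
  rfl

lemma sum_pow_crossNum {R : Type*} [CommRing R] (q : R) :
    ∑ M : CircMatching n, q ^ crossNum M.chords = partialSum q n 0 := by
  refine Finset.sum_bij (fun M _ => (natChords M.chords, ∅)) ?_ ?_ ?_ ?_
  · intro M _
    exact mem_partialMatchings.2 ⟨M.isPartialMatching_natChords, rfl⟩
  · rintro ⟨D, _, _⟩ _ ⟨D', _, _⟩ _ h
    have := Finset.map_injective _ (congrArg Prod.fst h)
    simpa using this
  · rintro ⟨D, S⟩ hc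
    rw [mem_partialMatchings, Finset.card_eq_zero] at hc
    obtain ⟨hD, hS⟩ := hc
    dsimp only at hD hS
    subst hS
    obtain ⟨M, rfl⟩ := exists_natChords_eq hD
    exact ⟨M, Finset.mem_univ _, rfl⟩
  · intro M _
    rw [partialWeight_natChords]

end CircMatching

/-- Touchard–Riordan formula: for every `m ≥ 0`, the polynomial
`Σ_M z^(cr(M))`, summed over all perfect matchings `M` of `2m` points on a
circle, equals `(1/(1−z)^m) · Σ_{k=−m}^{m} (−1)^k binom(2m, m+k) z^(binom(k,2))`
(stated here with the denominator cleared; the inner sum is reindexed by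
`j = k + m ∈ {0, …, 2m}`, so that `(−1)^k = (−1)^(j+m)` and
`binom(k,2) = (j−m)(j−m−1)/2`). -/
theorem touchard_riordan (m : ℕ) :
    (1 - Polynomial.X) ^ m *
        ∑ M : CircMatching (2 * m), (Polynomial.X : Polynomial ℚ) ^ crossNum M.chords =
      ∑ j ∈ Finset.range (2 * m + 1),
        Polynomial.C ((-1 : ℚ) ^ (j + m) * (Nat.choose (2 * m) j : ℚ)) *
          Polynomial.X ^ ((((j : ℤ) - m) * ((j : ℤ) - m - 1) / 2).toNat) := by
  have h := one_sub_pow_mul_partialSum (Polynomial.X : Polynomial ℚ) 0 m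
  rw [zero_add, hermiteMoment_two_mul_zero] at h
  rw [CircMatching.sum_pow_crossNum, h]
  refine Finset.sum_congr rfl fun j _ => ?_
  simp
end
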